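/- The outer automorphism group of Thompson's group T = T_{2,1} is cyclic of order 2, generated by the class of the automorphism given by conjugation by the orientation-reversing homeomorphism x ↦ −x of S¹ = ℝ/ℤ; equivalently, the inner automorphisms form a subgroup of index 2 in Aut(T_{2,1}), and conjugation by x ↦ −x is an automorphism of T_{2,1} that is not inner. -/

import Mathlib

/-!
Every automorphism of Thompson's group `T` is conjugation by an element of `T` or by such an element
composed with the reflection `x ↦ -x`.

*Reconstruction.* Since `T` has many elements of small support, disjointness of supports is a
property of the abstract group: it is read off from commutation with elements `g` satisfying the
condition `AD f g`, which is implied by disjointness of the supports of `f` and `g` and implies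
disjointness of the supports of `f` and `g ^ 12` (`Rubin.disjoint_iff`). Hence every automorphism
of `T` is induced by a homeomorphism `φ` of the circle (`Rubin.exists_homeo`, `Circ.rich`).

*Lifting.* Either `φ` or `-φ` lifts to an increasing homeomorphism `Φ` of the line commuting with
`x ↦ x + 1` (`Circ.exists_homeo_lift`), and `Φ` normalizes the group `PT` of lifts of elements of
`T`. It remains to prove that `PT` is its own normalizer (`Nrm.mem_PT`), for then the automorphism,
possibly composed with the reflection, is inner (`Circ.isInner_of_lifts`).

*The normalizer.* The map `Φ` preserves dyadics, which are the points admitting one-sided identity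
germs (`mem_Dy_iff_germ`), and the slopes of germs at dyadic fixed points, because these form an
infinite cyclic group in which contractions are recognized topologically (`Nrm.RG_conj`). Call
dyadics `y` and `y'` equivalent if some `F ∈ PT` takes `y` to `y'` with no break at `y` and with
`Φ⁻¹ F Φ` having no break at `Φ⁻¹ y`. If `Φ⁻¹ F Φ` has no break at `Φ⁻¹ y` and `y` is equivalent to
`F y`, then `F` has no break at `y` (`Nrm.nb_of_eqv`). Any given `F` respects equivalence off dyadics
of bounded level, so at high levels equivalence depends only on numerators modulo a power of two
(`Nrm.exists_congr`). Taking that power minimal, either all high level dyadics are equivalent, or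
equivalence detects the parity of a binary digit (`Nrm.exists_cases`). In both cases an element of
`PT` that maps a short interval `[0, 2 ^ (-L0)]` into itself is affine there as soon as its conjugate
has no break on the preimage (`Nrm.exists_affine`); in the parity case this holds because adjacent
small dyadic intervals are mapped to the two halves of a dyadic interval and can be merged
(`Nrm.good_step`). Conjugating by `Φ` the two contractions of `Φ⁻¹ [0, 2 ^ (-L0)]` by one half
towards its endpoints gives affine maps of slope `1/2`, so `Φ` satisfies two halving equations, whose
only continuous solutions are affine (`Nrm.exists_affine_interval`). Dyadic translations carry this
local form to every point, whence `Φ ∈ PT`.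

*The reflection is not inner.* An element of `T` inducing the same conjugation as the reflection
would differ from it by an element of the centralizer of `T`, which is trivial; but the reflection
has no increasing lift (`Circ.rho_not_inner`).
-/

noncomputable section

/-- `ℤ[1/n]` realized as a subset of `ℝ`: all reals of the form `a * n^b` with `a b : ℤ`. -/
def zpows (n : ℕ) : Set ℝ := {x : ℝ | ∃ a b : ℤ, x = (a : ℝ) * (n : ℝ) ^ b}

/-- The defining properties of the (unique) ring homomorphism `φₙ : ℤ[1/n] → ℤ/(n-1)ℤ`,
expressed for a function `φ : ℝ → ZMod (n-1)` restricted to the subset `zpows n`. -/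
def IsPhi (n : ℕ) (φ : ℝ → ZMod (n - 1)) : Prop :=
  (∀ x ∈ zpows n, ∀ y ∈ zpows n, φ (x + y) = φ x + φ y) ∧
  (∀ x ∈ zpows n, ∀ y ∈ zpows n, φ (x * y) = φ x * φ y) ∧
  φ 1 = 1

/-- Piecewise linearity data on the circle `ℝ/rℤ`, expressed for an `r`-periodic lift
`F : ℝ → ℝ`: there is an `r`-periodic break set `B ⊆ ℤ[1/n]`, finite in each period,
off which `F` is locally affine with slopes integral powers of `n`. -/
def CircPL (n : ℕ) (r : ℝ) (F : ℝ → ℝ) : Prop :=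
  ∃ B : Set ℝ,
    (B ∩ Set.Ico (0 : ℝ) r).Finite ∧ (∀ x ∈ B, x + r ∈ B ∧ x - r ∈ B) ∧ B ⊆ zpows n ∧
    ∀ x ∉ B, ∃ (k : ℤ) (c : ℝ), ∃ ε > 0, ∀ y : ℝ, |y - x| < ε → F y = (n : ℝ) ^ k * y + c

/-- Membership in `T_{n,r}`: an orientation-preserving homeomorphism of the circle
`S_r = ℝ/rℤ` (encoded by a strictly monotone surjective lift commuting with `x ↦ x + r`),
piecewise linear with finitely many breaks, all breaks in `ℤ[1/n]`, all slopes integral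
powers of `n`, and mapping (the image of) `ℤ[1/n]` into itself. -/
def MemT (n : ℕ) (r : ℝ) (f : AddCircle r → AddCircle r) : Prop :=
  ∃ F : ℝ → ℝ,
    (∀ x : ℝ, f (x : AddCircle r) = ((F x : ℝ) : AddCircle r)) ∧
    (∀ x : ℝ, F (x + r) = F x + r) ∧
    StrictMono F ∧ Function.Surjective F ∧ CircPL n r F ∧
    (∀ q ∈ zpows n, F q ∈ zpows n)

/-- An everywhere-defined element of `T̄_{n,r}`: a continuous, locally orientation-preserving
local homeomorphism of the circle `S_r` (encoded by a strictly monotone continuous lift `G`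
with `G (x + r) = G x + d·r` for some degree `d ≥ 1`), piecewise linear with finitely many
breaks, all breaks in `ℤ[1/n]`, all slopes integral powers of `n`, and mapping `ℤ[1/n]`
into itself. -/
def MemTbar (n : ℕ) (r : ℝ) (g : AddCircle r → AddCircle r) : Prop :=
  ∃ (G : ℝ → ℝ) (d : ℕ), 0 < d ∧
    (∀ x : ℝ, g (x : AddCircle r) = ((G x : ℝ) : AddCircle r)) ∧
    (∀ x : ℝ, G (x + r) = G x + (d : ℝ) * r) ∧
    StrictMono G ∧ Continuous G ∧ CircPL n r G ∧
    (∀ q ∈ zpows n, G q ∈ zpows n)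

/-- An orientation-preserving homeomorphism of the circle `S_r`, encoded by the existence
of a strictly monotone surjective lift commuting with `x ↦ x + r`. -/
def OrientedHomeo (r : ℝ) (h : AddCircle r → AddCircle r) : Prop :=
  ∃ H : ℝ → ℝ,
    (∀ x : ℝ, h (x : AddCircle r) = ((H x : ℝ) : AddCircle r)) ∧
    (∀ x : ℝ, H (x + r) = H x + r) ∧
    StrictMono H ∧ Function.Surjective H

/-- The doubling map `ν₂ : S¹ → S¹`, `x ↦ 2x (mod 1)`. -/
def nu2 : AddCircle (1 : ℝ) → AddCircle (1 : ℝ) := fun z => z + z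

/-- The image of the dyadic rationals `ℤ[1/2]` in the circle `S¹ = ℝ/ℤ`. -/
def dyadicCircle : Set (AddCircle (1 : ℝ)) :=
  {z : AddCircle (1 : ℝ) | ∃ q ∈ zpows 2, z = ((q : ℝ) : AddCircle (1 : ℝ))}

/-- Thompson's group `T = T_{2,1}` as a subgroup of the permutations of the circle
(the set of its elements is closed under the group operations, so the subgroup it
generates has exactly this set as carrier). -/
def Tgrp : Subgroup (Equiv.Perm (AddCircle (1 : ℝ))) :=
  Subgroup.closure {f : Equiv.Perm (AddCircle (1 : ℝ)) | MemT 2 1 ⇑f}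

/-- An automorphism of `T` is inner if it is conjugation by an element of `T`. -/
def IsInnerT (α : MulAut ↥Tgrp) : Prop :=
  ∃ g : ↥Tgrp, ∀ f : ↥Tgrp, α f = g * f * g⁻¹

/-! ### Dyadic numbers, one-sided germs, and the lift `PT` of `T` -/

/-- The ring `ℤ[1/2]` of dyadic rationals, as a subring of `ℝ`. -/
def Dy : Subring ℝ where
  carrier := {x | ∃ (a : ℤ) (n : ℕ), x = a / 2 ^ n}
  mul_mem' := by
    rintro _ _ ⟨a, n, rfl⟩ ⟨b, m, rfl⟩
    exact ⟨a * b, n + m, by push_cast; rw [pow_add]; field_simp⟩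
  one_mem' := ⟨1, 0, by simp⟩
  add_mem' := by
    rintro _ _ ⟨a, n, rfl⟩ ⟨b, m, rfl⟩
    exact ⟨a * 2 ^ m + b * 2 ^ n, n + m, by push_cast; rw [pow_add]; field_simp⟩
  zero_mem' := ⟨0, 0, by simp⟩
  neg_mem' := by
    rintro _ ⟨a, n, rfl⟩
    exact ⟨-a, n, by push_cast; ring⟩

theorem mem_Dy {x : ℝ} : x ∈ Dy ↔ ∃ (a : ℤ) (n : ℕ), x = a / 2 ^ n := Iff.rfl

theorem zpow_mem_Dy (k : ℤ) : (2 : ℝ) ^ k ∈ Dy := by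
  obtain ⟨n, rfl | rfl⟩ := k.eq_nat_or_neg
  · exact ⟨2 ^ n, 0, by simp⟩
  · exact ⟨1, n, by simp⟩

theorem mem_Dy_iff_zpows {x : ℝ} : x ∈ Dy ↔ x ∈ zpows 2 := by
  constructor
  · rintro ⟨a, n, rfl⟩
    exact ⟨a, -n, by simp [div_eq_mul_inv]⟩
  · rintro ⟨a, b, rfl⟩
    exact Dy.mul_mem (intCast_mem Dy a) (zpow_mem_Dy b)

theorem zpow_mul_mem_Dy {k : ℤ} {x : ℝ} : 2 ^ k * x ∈ Dy ↔ x ∈ Dy := by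
  refine ⟨fun h => ?_, Dy.mul_mem (zpow_mem_Dy k)⟩
  have := Dy.mul_mem (zpow_mem_Dy (-k)) h
  rwa [← mul_assoc, ← zpow_add₀ two_ne_zero, neg_add_cancel, zpow_zero, one_mul] at this

theorem exists_Dy_btwn {a b : ℝ} (h : a < b) : ∃ x ∈ Dy, a < x ∧ x < b := by
  obtain ⟨n, hn⟩ := exists_pow_lt_of_lt_one (sub_pos.2 h) (by norm_num : (1 / 2 : ℝ) < 1)
  have hp : (0 : ℝ) < 2 ^ n := by positivity
  refine ⟨(⌊a * 2 ^ n⌋ + 1 : ℤ) / 2 ^ n, ⟨_, n, rfl⟩, ?_, ?_⟩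
  · rw [lt_div_iff₀ hp]; push_cast; exact Int.lt_floor_add_one _
  · rw [div_lt_iff₀ hp]; push_cast
    have h1 := Int.floor_le (a * 2 ^ n)
    have h2 : 1 < (b - a) * 2 ^ n := by
      rw [one_div, inv_pow, inv_lt_iff_one_lt_mul₀ hp] at hn; linarith
    nlinarith

/-- `F` is affine with slope `2 ^ k` on some interval `[x, x + ε]`. -/
def RG (F : ℝ → ℝ) (x : ℝ) (k : ℤ) : Prop :=
  ∃ ε > 0, ∀ y, x ≤ y → y ≤ x + ε → F y = F x + 2 ^ k * (y - x)

/-- `F` is affine with slope `2 ^ k` on some interval `[x - ε, x]`. -/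
def LG (F : ℝ → ℝ) (x : ℝ) (k : ℤ) : Prop :=
  ∃ ε > 0, ∀ y, x - ε ≤ y → y ≤ x → F y = F x + 2 ^ k * (y - x)

/-- `F` has no break at `x`: it is affine near `x`, with slope a power of `2`. -/
def NB (F : ℝ → ℝ) (x : ℝ) : Prop := ∃ k, RG F x k ∧ LG F x k

theorem LG_iff {F : ℝ → ℝ} {x : ℝ} {k : ℤ} : LG F x k ↔ RG (fun t => -F (-t)) (-x) k := by
  constructor
  · rintro ⟨ε, h, H⟩
    refine ⟨ε, h, fun y h1 h2 => ?_⟩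
    have := H (-y) (by linarith) (by linarith)
    simp only [neg_neg]; rw [this]; ring
  · rintro ⟨ε, h, H⟩
    refine ⟨ε, h, fun y h1 h2 => ?_⟩
    have := H (-y) (by linarith) (by linarith)
    simp only [neg_neg] at this; linarith

theorem RG_iff {F : ℝ → ℝ} {x : ℝ} {k : ℤ} : RG F x k ↔ LG (fun t => -F (-t)) (-x) k := by
  rw [LG_iff]; simp

theorem two_zpow_pos (k : ℤ) : (0 : ℝ) < 2 ^ k := by positivity

theorem two_zpow_inj {k l : ℤ} (h : (2 : ℝ) ^ k = 2 ^ l) : k = l :=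
  zpow_right_injective₀ (by norm_num) (by norm_num) h

theorem RG.unique {F : ℝ → ℝ} {x : ℝ} {k l : ℤ} (h1 : RG F x k) (h2 : RG F x l) : k = l := by
  obtain ⟨ε, he, H⟩ := h1
  obtain ⟨δ, hd, K⟩ := h2
  have hm : 0 < min ε δ := lt_min he hd
  have e1 := H (x + min ε δ) (by linarith) (by linarith [min_le_left ε δ])
  have e2 := K (x + min ε δ) (by linarith) (by linarith [min_le_right ε δ])
  rw [e1] at e2
  apply two_zpow_inj
  have : (2 : ℝ) ^ k * min ε δ = 2 ^ l * min ε δ := by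
    simpa using e2
  exact mul_right_cancel₀ hm.ne' this

theorem LG.unique {F : ℝ → ℝ} {x : ℝ} {k l : ℤ} (h1 : LG F x k) (h2 : LG F x l) : k = l :=
  (LG_iff.1 h1).unique (LG_iff.1 h2)

theorem RG.comp {F G : ℝ → ℝ} {x : ℝ} {k l : ℤ} (hG : RG G (F x) l)
    (hF : RG F x k) : RG (fun t => G (F t)) x (l + k) := by
  obtain ⟨ε, he, H⟩ := hF
  obtain ⟨δ, hd, K⟩ := hG
  have hk := two_zpow_pos k
  have hm : 0 < min ε (δ / 2 ^ k) := lt_min he (by positivity)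
  refine ⟨_, hm, fun y h1 h2 => ?_⟩
  have e1 := H y h1 (h2.trans (by linarith [min_le_left ε (δ / 2 ^ k)]))
  have h3 : y - x ≤ δ / 2 ^ k := by linarith [min_le_right ε (δ / 2 ^ k)]
  rw [le_div_iff₀ hk] at h3
  have e2 := K (F y) (by rw [e1]; nlinarith) (by rw [e1]; nlinarith)
  change G (F y) = _
  rw [e2, e1, zpow_add₀ (two_ne_zero' ℝ)]; ring

theorem LG.comp {F G : ℝ → ℝ} {x : ℝ} {k l : ℤ} (hG : LG G (F x) l)
    (hF : LG F x k) : LG (fun t => G (F t)) x (l + k) := by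
  rw [LG_iff] at *
  have := RG.comp (F := fun t => -F (-t)) (G := fun t => -G (-t)) (x := -x) (k := k) (l := l)
    (by simpa using hG) hF
  simpa using this

theorem NB.comp {F G : ℝ → ℝ} {x : ℝ} (hG : NB G (F x)) (hF : NB F x) :
    NB (fun t => G (F t)) x := by
  obtain ⟨k, h1, h2⟩ := hF
  obtain ⟨l, h3, h4⟩ := hG
  exact ⟨_, h3.comp h1, h4.comp h2⟩

theorem RG.congr {F G : ℝ → ℝ} {x b : ℝ} {k : ℤ} (hx : x < b) (h : ∀ y, x ≤ y → y ≤ b → F y = G y)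
    (hF : RG F x k) : RG G x k := by
  obtain ⟨ε, he, H⟩ := hF
  refine ⟨min ε (b - x), lt_min he (by linarith), fun y h1 h2 => ?_⟩
  rw [← h y h1 (by linarith [min_le_right ε (b - x)]), ← h x le_rfl hx.le]
  exact H y h1 (by linarith [min_le_left ε (b - x)])

theorem LG.congr {F G : ℝ → ℝ} {x a : ℝ} {k : ℤ} (hx : a < x) (h : ∀ y, a ≤ y → y ≤ x → F y = G y)
    (hF : LG F x k) : LG G x k := by
  obtain ⟨ε, he, H⟩ := hF
  refine ⟨min ε (x - a), lt_min he (by linarith), fun y h1 h2 => ?_⟩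
  rw [← h y (by linarith [min_le_right ε (x - a)]) h2, ← h x hx.le le_rfl]
  exact H y (by linarith [min_le_left ε (x - a)]) h2

theorem NB.congr {F G : ℝ → ℝ} {x a b : ℝ} (ha : a < x) (hb : x < b)
    (h : ∀ y, a ≤ y → y ≤ b → F y = G y) (hF : NB F x) : NB G x := by
  obtain ⟨k, h1, h2⟩ := hF
  exact ⟨k, h1.congr hb fun y h3 h4 => h y (ha.le.trans h3) h4,
    h2.congr ha fun y h3 h4 => h y h3 (h4.trans hb.le)⟩

theorem RG_affine (k : ℤ) (c x : ℝ) : RG (fun t => 2 ^ k * t + c) x k :=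
  ⟨1, one_pos, fun y _ _ => by ring⟩

theorem LG_affine (k : ℤ) (c x : ℝ) : LG (fun t => 2 ^ k * t + c) x k :=
  ⟨1, one_pos, fun y _ _ => by ring⟩

theorem NB_affine (k : ℤ) (c x : ℝ) : NB (fun t => 2 ^ k * t + c) x :=
  ⟨k, RG_affine k c x, LG_affine k c x⟩

theorem RG.of_eq {F : ℝ → ℝ} {x b c : ℝ} {k : ℤ} (hx : x < b)
    (h : ∀ y, x ≤ y → y ≤ b → F y = 2 ^ k * y + c) : RG F x k :=
  (RG_affine k c x).congr hx fun y h1 h2 => (h y h1 h2).symm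

theorem LG.of_eq {F : ℝ → ℝ} {x a c : ℝ} {k : ℤ} (hx : a < x)
    (h : ∀ y, a ≤ y → y ≤ x → F y = 2 ^ k * y + c) : LG F x k :=
  (LG_affine k c x).congr hx fun y h1 h2 => (h y h1 h2).symm

theorem NB.of_eq {F : ℝ → ℝ} {x a b c : ℝ} {k : ℤ} (ha : a < x) (hb : x < b)
    (h : ∀ y, a ≤ y → y ≤ b → F y = 2 ^ k * y + c) : NB F x :=
  (NB_affine k c x).congr ha hb fun y h1 h2 => (h y h1 h2).symm

theorem NB_id (x : ℝ) : NB (fun t => t) x :=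
  NB.of_eq (k := 0) (c := 0) (sub_one_lt x) (lt_add_one x) (by simp)

theorem RG.inv (F : ℝ ≃o ℝ) {x : ℝ} {k : ℤ} (h : RG F x k) : RG F.symm (F x) (-k) := by
  obtain ⟨ε, he, H⟩ := h
  have hk := two_zpow_pos k
  refine ⟨2 ^ k * ε, by positivity, fun y h1 h2 => ?_⟩
  have h3 : y - F x ≤ 2 ^ k * ε := by linarith
  have := H (x + 2 ^ (-k) * (y - F x)) (by have := two_zpow_pos (-k); nlinarith) (by
    have : (2 : ℝ) ^ (-k) * (y - F x) ≤ 2 ^ (-k) * (2 ^ k * ε) := by gcongr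
    rw [← mul_assoc, ← zpow_add₀ two_ne_zero, neg_add_cancel, zpow_zero, one_mul] at this
    linarith)
  rw [F.symm_apply_apply, F.symm_apply_eq, this, add_sub_cancel_left, ← mul_assoc,
    ← zpow_add₀ two_ne_zero, add_neg_cancel, zpow_zero]
  ring

/-- Conjugate of an increasing homeomorphism by `x ↦ -x`. -/
def nconj (F : ℝ ≃o ℝ) : ℝ ≃o ℝ where
  toFun x := -F (-x)
  invFun x := -F.symm (-x)
  left_inv x := by simp
  right_inv x := by simp
  map_rel_iff' := by intro a b; simp

@[simp] theorem nconj_apply (F : ℝ ≃o ℝ) (x : ℝ) : nconj F x = -F (-x) := rfl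

@[simp] theorem nconj_symm_apply (F : ℝ ≃o ℝ) (x : ℝ) : (nconj F).symm x = -F.symm (-x) := rfl

@[simp] theorem nconj_nconj (F : ℝ ≃o ℝ) : nconj (nconj F) = F := by ext; simp

theorem nconj_mul (F G : ℝ ≃o ℝ) : nconj (F * G) = nconj F * nconj G := by
  ext; simp [RelIso.mul_apply]

theorem nconj_inv (F : ℝ ≃o ℝ) : nconj F⁻¹ = (nconj F)⁻¹ := by ext; rfl

theorem LG.inv (F : ℝ ≃o ℝ) {x : ℝ} {k : ℤ} (h : LG F x k) : LG F.symm (F x) (-k) := by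
  rw [LG_iff] at *
  have : RG (nconj F).symm (nconj F (-x)) (-k) := RG.inv (nconj F) h
  rw [nconj_apply, neg_neg] at this
  exact this

theorem NB.inv (F : ℝ ≃o ℝ) {x : ℝ} (h : NB F x) : NB F.symm (F x) := by
  obtain ⟨k, h1, h2⟩ := h
  exact ⟨-k, h1.inv, h2.inv⟩

/-- Increasing dyadic piecewise linear homeomorphisms of the line (breaks may accumulate at
infinity only): every point has one-sided affine germs with slopes powers of `2`, breaks are
dyadic, and dyadics go to dyadics. -/
def IsPL (F : ℝ ≃o ℝ) : Prop :=
  (∀ x, ∃ k l, RG F x k ∧ LG F x l ∧ (k ≠ l → x ∈ Dy)) ∧ ∀ x ∈ Dy, F x ∈ Dy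

theorem IsPL.nb {F : ℝ ≃o ℝ} (h : IsPL F) {x : ℝ} (hx : x ∉ Dy) : NB F x := by
  obtain ⟨k, l, h1, h2, h3⟩ := h.1 x
  obtain rfl : k = l := by by_contra h4; exact hx (h3 h4)
  exact ⟨k, h1, h2⟩

theorem IsPL.symm_mem {F : ℝ ≃o ℝ} (h : IsPL F) {x : ℝ} (hx : F x ∈ Dy) : x ∈ Dy := by
  obtain ⟨k, l, ⟨ε, he, H⟩, -⟩ := h.1 x
  obtain ⟨t, ht, h1, h2⟩ := exists_Dy_btwn (show x < x + ε by linarith)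
  have h3 := H t h1.le h2.le
  have h4 : 2 ^ k * (t - x) ∈ Dy := by
    have := Dy.sub_mem (h.2 t ht) hx
    rwa [h3, add_sub_cancel_left] at this
  have := Dy.sub_mem ht (zpow_mul_mem_Dy.1 h4)
  simpa using this

theorem IsPL.mem_iff {F : ℝ ≃o ℝ} (h : IsPL F) {x : ℝ} : F x ∈ Dy ↔ x ∈ Dy :=
  ⟨h.symm_mem, h.2 x⟩

theorem IsPL.mul {F G : ℝ ≃o ℝ} (hF : IsPL F) (hG : IsPL G) : IsPL (F * G) := by
  refine ⟨fun x => ?_, fun x hx => hF.2 _ (hG.2 _ hx)⟩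
  obtain ⟨k, l, h1, h2, h3⟩ := hG.1 x
  obtain ⟨k', l', h1', h2', h3'⟩ := hF.1 (G x)
  refine ⟨_, _, h1'.comp h1, h2'.comp h2, fun h => ?_⟩
  by_cases h4 : k = l
  · exact hG.symm_mem (h3' fun h5 => h (by rw [h4, h5]))
  · exact h3 h4

theorem IsPL.inv {F : ℝ ≃o ℝ} (hF : IsPL F) : IsPL F⁻¹ := by
  refine ⟨fun x => ?_, fun x hx => hF.symm_mem (by
    change F (F.symm x) ∈ Dy; simpa using hx)⟩
  obtain ⟨k, l, h1, h2, h3⟩ := hF.1 (F.symm x)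
  have h4 := h1.inv
  have h5 := h2.inv
  rw [F.apply_symm_apply] at h4 h5
  refine ⟨-k, -l, h4, h5, fun h => ?_⟩
  have := hF.2 _ (h3 fun h' => h (by rw [h']))
  simpa using this

theorem IsPL.one : IsPL 1 := by
  refine ⟨fun x => ?_, fun x hx => hx⟩
  obtain ⟨k, h1, h2⟩ := NB_id x
  exact ⟨k, k, h1, h2, fun h => absurd rfl h⟩

theorem IsPL.conj_neg {F : ℝ ≃o ℝ} (hF : IsPL F) : IsPL (nconj F) := by
  refine ⟨fun x => ?_, fun x hx => Dy.neg_mem (hF.2 _ (Dy.neg_mem hx))⟩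
  obtain ⟨k, l, h1, h2, h3⟩ := hF.1 (-x)
  refine ⟨l, k, ?_, ?_, fun h => by simpa using h3 (Ne.symm h)⟩
  · have := LG_iff.1 h2; rw [neg_neg] at this; exact this
  · have := RG_iff.1 h1; rw [neg_neg] at this; exact this

/-- The lift of Thompson's group `T` to the line: the dyadic piecewise linear homeomorphisms
commuting with `x ↦ x + 1`. -/
def PT : Subgroup (ℝ ≃o ℝ) where
  carrier := {F | IsPL F ∧ ∀ x, F (x + 1) = F x + 1}
  mul_mem' := by
    rintro F G ⟨h1, h2⟩ ⟨h3, h4⟩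
    exact ⟨h1.mul h3, fun x => by simp [RelIso.mul_apply, h2, h4]⟩
  one_mem' := ⟨IsPL.one, fun x => rfl⟩
  inv_mem' := by
    rintro F ⟨h1, h2⟩
    refine ⟨h1.inv, fun x => ?_⟩
    change F.symm (x + 1) = F.symm x + 1
    rw [F.symm_apply_eq, h2]; simp

theorem mem_PT {F : ℝ ≃o ℝ} : F ∈ PT ↔ IsPL F ∧ ∀ x, F (x + 1) = F x + 1 := Iff.rfl

theorem nconj_mem_PT {F : ℝ ≃o ℝ} (h : F ∈ PT) : nconj F ∈ PT := by
  refine ⟨h.1.conj_neg, fun x => ?_⟩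
  have := h.2 (-(x + 1))
  simp only [nconj_apply]
  rw [show -(x + 1) + 1 = -x by ring] at this
  rw [this]; ring

/-- A homeomorphism without breaks inside an interval is affine there. -/
theorem affine_of_NB {F : ℝ ≃o ℝ} {a b : ℝ} (hab : a < b) (h : ∀ x, a < x → x < b → NB F x) :
    ∃ (k : ℤ) (c : ℝ), ∀ x, a ≤ x → x ≤ b → F x = 2 ^ k * x + c := by
  have hcont : Continuous F := F.continuous
  set m := (a + b) / 2 with hm
  have ham : a < m := by rw [hm]; linarith
  have hmb : m < b := by rw [hm]; linarith
  obtain ⟨k, h1, h2⟩ := h m ham hmb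
  -- the set of points with slope germ `2 ^ k` on both sides and the right value is clopen
  let S : Set ℝ := {x | x ∈ Set.Ioo a b ∧ F x = F m + 2 ^ k * (x - m) ∧ RG F x k}
  have key : ∀ x ∈ Set.Ioo a b, ∃ ε > 0, ∀ y ∈ Set.Ioo a b, |y - x| < ε → (y ∈ S ↔ x ∈ S) := by
    rintro x hx
    obtain ⟨l, ⟨ε, he, H⟩, ⟨δ, hd, K⟩⟩ := h x hx.1 hx.2
    refine ⟨min ε δ, lt_min he hd, fun y hy hyx => ?_⟩
    have g1 := (abs_lt.1 hyx).1
    have g2 := (abs_lt.1 hyx).2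
    have m1 := min_le_left ε δ
    have m2 := min_le_right ε δ
    have haff : ∀ z, x - δ ≤ z → z ≤ x + ε → F z = 2 ^ l * z + (F x - 2 ^ l * x) := by
      intro z h3 h4
      rcases le_total x z with h5 | h5
      · rw [H z h5 h4]; ring
      · rw [K z h3 h5]; ring
    have hy' : RG F y l := RG.of_eq (b := x + ε) (by linarith)
      (fun z h3 h4 => haff z (by linarith) h4)
    have hx' : RG F x l := RG.of_eq (b := x + ε) (by linarith)
      (fun z h3 h4 => haff z (by linarith) h4)
    have hv := haff y (by linarith) (by linarith)
    constructor
    · rintro ⟨-, h3, h4⟩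
      obtain rfl := hy'.unique h4
      exact ⟨hx, by linarith, hx'⟩
    · rintro ⟨-, h3, h4⟩
      obtain rfl := hx'.unique h4
      exact ⟨hy, by rw [hv, h3]; ring, hy'⟩
  have hS : Set.Ioo a b ⊆ S := by
    have hpre : IsPreconnected (Set.Ioo a b) := isPreconnected_Ioo
    have hloc : ∀ x ∈ Set.Ioo a b, ∃ ε > 0, ∀ y ∈ Metric.ball x ε, (y ∈ S ↔ x ∈ S) := by
      intro x hx
      obtain ⟨ε, he, H⟩ := key x hx
      refine ⟨min ε (min (x - a) (b - x)), lt_min he (lt_min (by linarith [hx.1])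
        (by linarith [hx.2])), fun y hy => ?_⟩
      rw [Metric.mem_ball, Real.dist_eq, lt_min_iff, lt_min_iff] at hy
      obtain ⟨h3, h4, h5⟩ := hy
      exact H y ⟨by linarith [(abs_lt.1 h4).1], by linarith [(abs_lt.1 h5).2]⟩ h3
    have hSo : IsOpen S := by
      rw [Metric.isOpen_iff]
      intro x hx
      obtain ⟨ε, he, H⟩ := hloc x hx.1
      exact ⟨ε, he, fun y hy => (H y hy).2 hx⟩
    have hTo : IsOpen (Set.Ioo a b \ S) := by
      rw [Metric.isOpen_iff]
      intro x hx
      obtain ⟨ε, he, H⟩ := hloc x hx.1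
      obtain ⟨δ, hd, K⟩ := Metric.isOpen_iff.1 (isOpen_Ioo (a := a) (b := b)) x hx.1
      refine ⟨min ε δ, lt_min he hd, fun y hy => ⟨K (Metric.ball_subset_ball (min_le_right _ _) hy),
        fun hyS => hx.2 ((H y (Metric.ball_subset_ball (min_le_left _ _) hy)).1 hyS)⟩⟩
    by_contra hcon
    obtain ⟨x, hx, hxS⟩ := Set.not_subset.1 hcon
    obtain ⟨z, -, hz1, hz2⟩ := hpre S (Set.Ioo a b \ S) hSo hTo
      (fun y hy => by by_cases hyS : y ∈ S
                      · exact Or.inl hyS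
                      · exact Or.inr ⟨hy, hyS⟩)
      ⟨m, ⟨ham, hmb⟩, ⟨ham, hmb⟩, by simp, h1⟩ ⟨x, hx, hx, hxS⟩
    exact hz2.2 hz1
  refine ⟨k, F m - 2 ^ k * m, ?_⟩
  have hcl : Set.EqOn F (fun x => 2 ^ k * x + (F m - 2 ^ k * m)) (closure (Set.Ioo a b)) := by
    apply Set.EqOn.closure _ hcont (by fun_prop)
    intro x hx
    simp only [(hS hx).2.1]; ring
  rw [closure_Ioo hab.ne] at hcl
  exact fun x h3 h4 => hcl ⟨h3, h4⟩

/-! ### Construction of elements of `PT` -/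

/-- The affine map `x ↦ 2 ^ k * x + c`. -/
def aff (k : ℤ) (c : ℝ) : ℝ ≃o ℝ :=
  StrictMono.orderIsoOfSurjective (fun x : ℝ => 2 ^ k * x + c)
    (fun x y h => by have := two_zpow_pos k; simp only; nlinarith)
    (fun y => ⟨(y - c) / 2 ^ k, by have := two_zpow_pos k; field_simp; ring⟩)

@[simp] theorem aff_apply (k : ℤ) (c x : ℝ) : aff k c x = 2 ^ k * x + c := rfl

theorem isPL_aff (k : ℤ) {c : ℝ} (hc : c ∈ Dy) : IsPL (aff k c) :=
  ⟨fun x => ⟨k, k, RG_affine k c x, LG_affine k c x, fun h => absurd rfl h⟩,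
    fun _ hx => Dy.add_mem (zpow_mul_mem_Dy.2 hx) hc⟩

/-- Glueing two homeomorphisms agreeing at a dyadic point. -/
theorem exists_glue {F G : ℝ ≃o ℝ} (hF : IsPL F) (hG : IsPL G) {a : ℝ} (ha : a ∈ Dy)
    (h : F a = G a) : ∃ H : ℝ ≃o ℝ, IsPL H ∧ (∀ x ≤ a, H x = F x) ∧ ∀ x, a ≤ x → H x = G x := by
  classical
  let H0 : ℝ → ℝ := fun x => if x ≤ a then F x else G x
  have h1 : ∀ x ≤ a, H0 x = F x := fun x hx => if_pos hx
  have h2 : ∀ x, a ≤ x → H0 x = G x := by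
    intro x hx
    rcases hx.eq_or_lt with rfl | hx
    · rw [h1 _ le_rfl, h]
    · exact if_neg (not_le.2 hx)
  have hmono : StrictMono H0 := by
    intro x y hxy
    rcases le_total y a with hy | hy
    · rw [h1 x (hxy.le.trans hy), h1 y hy]; exact F.strictMono hxy
    · rcases le_total x a with hx | hx
      · rw [h1 x hx, h2 y hy]
        rcases hx.eq_or_lt with rfl | hx
        · rw [h]; exact G.strictMono hxy
        · exact (F.strictMono hx).trans_le (h ▸ G.monotone hy)
      · rw [h2 x hx, h2 y hy]; exact G.strictMono hxy
  have hsurj : Function.Surjective H0 := by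
    intro y
    rcases le_total y (F a) with hy | hy
    · refine ⟨F.symm y, ?_⟩
      rw [h1 _ (by rw [F.symm_apply_le]; exact hy), F.apply_symm_apply]
    · refine ⟨G.symm y, ?_⟩
      rw [h2 _ (by rw [G.le_symm_apply, ← h]; exact hy), G.apply_symm_apply]
  refine ⟨StrictMono.orderIsoOfSurjective H0 hmono hsurj, ⟨fun x => ?_, fun x hx => ?_⟩, h1, h2⟩
  · change ∃ k l, RG H0 x k ∧ LG H0 x l ∧ (k ≠ l → x ∈ Dy)
    obtain ⟨k, l, a1, a2, a3⟩ := hF.1 x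
    obtain ⟨k', l', b1, b2, b3⟩ := hG.1 x
    rcases lt_trichotomy x a with hx | rfl | hx
    · exact ⟨k, l, a1.congr hx fun y _ hy => (h1 y hy).symm,
        a2.congr (sub_one_lt x) fun y _ hy => (h1 y (hy.trans hx.le)).symm, a3⟩
    · exact ⟨k', l, b1.congr (lt_add_one x) fun y hy _ => (h2 y hy).symm,
        a2.congr (sub_one_lt x) fun y _ hy => (h1 y hy).symm, fun _ => ha⟩
    · exact ⟨k', l', b1.congr (lt_add_one x) fun y hy _ => (h2 y (hx.le.trans hy)).symm,
        b2.congr hx fun y hy _ => (h2 y hy).symm, b3⟩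
  · change H0 x ∈ Dy
    rcases le_total x a with h' | h'
    · rw [h1 x h']; exact hF.2 x hx
    · rw [h2 x h']; exact hG.2 x hx

/-- Some dyadic piecewise linear homeomorphism carries `[0, u]` onto `[0, v]`. -/
def LenRel (u v : ℝ) : Prop := ∃ H : ℝ ≃o ℝ, IsPL H ∧ H 0 = 0 ∧ H u = v

theorem LenRel.trans {u v w : ℝ} (h1 : LenRel u v) (h2 : LenRel v w) : LenRel u w := by
  obtain ⟨H, a, b, c⟩ := h1
  obtain ⟨K, a', b', c'⟩ := h2
  exact ⟨K * H, a'.mul a, by rw [RelIso.mul_apply, b, b'], by rw [RelIso.mul_apply, c, c']⟩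

theorem LenRel.symm {u v : ℝ} (h1 : LenRel u v) : LenRel v u := by
  obtain ⟨H, a, b, c⟩ := h1
  exact ⟨H⁻¹, a.inv, by change H.symm 0 = 0; rw [H.symm_apply_eq, b],
    by change H.symm v = u; rw [H.symm_apply_eq, c]⟩

theorem LenRel.scale (k : ℤ) (u : ℝ) : LenRel u (2 ^ k * u) :=
  ⟨aff k 0, isPL_aff k Dy.zero_mem, by simp, by simp⟩

theorem lenRel_nat (m : ℕ) : LenRel (m + 1 : ℝ) 1 := by
  induction m with
  | zero => simpa using LenRel.scale 0 1
  | succ n ih =>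
    refine LenRel.trans ?_ ih
    obtain ⟨H, h1, h2, h3⟩ := exists_glue (F := aff 0 0) (G := aff (-1) (2 ^ (-1 : ℤ) * n))
      (isPL_aff 0 Dy.zero_mem) (isPL_aff _ (zpow_mul_mem_Dy.2 (natCast_mem Dy n)))
      (natCast_mem Dy n) (by simp; ring)
    refine ⟨H, h1, by rw [h2 _ (by positivity)]; simp, ?_⟩
    rw [h3 _ (by push_cast; linarith)]
    simp; ring

/-- All intervals of positive dyadic length are identified with the unit interval. -/
theorem lenRel_one {u : ℝ} (hu : u ∈ Dy) (h0 : 0 < u) : LenRel u 1 := by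
  obtain ⟨a, n, rfl⟩ := hu
  have hp : (0 : ℝ) < 2 ^ n := by positivity
  have ha : 0 < a := by
    have := (div_pos_iff_of_pos_right hp).1 h0
    exact_mod_cast this
  obtain ⟨m, rfl⟩ : ∃ m : ℕ, a = m + 1 := ⟨(a - 1).toNat, by omega⟩
  refine LenRel.trans (LenRel.scale n _) ?_
  rw [zpow_natCast, mul_div_cancel₀ _ hp.ne']
  exact_mod_cast lenRel_nat m

/-- Any two dyadic intervals are identified by a piecewise linear homeomorphism. -/
theorem exists_PL_map {a b c d : ℝ} (ha : a ∈ Dy) (hb : b ∈ Dy) (hc : c ∈ Dy) (hd : d ∈ Dy)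
    (hab : a < b) (hcd : c < d) : ∃ H : ℝ ≃o ℝ, IsPL H ∧ H a = c ∧ H b = d := by
  obtain ⟨H, h1, h2, h3⟩ := (lenRel_one (Dy.sub_mem hb ha) (sub_pos.2 hab)).trans
    (lenRel_one (Dy.sub_mem hd hc) (sub_pos.2 hcd)).symm
  refine ⟨aff 0 c * H * aff 0 (-a), ((isPL_aff 0 hc).mul h1).mul (isPL_aff 0 (Dy.neg_mem ha)),
    ?_, ?_⟩
  · simp [RelIso.mul_apply, h2]
  · simp [RelIso.mul_apply, ← sub_eq_add_neg, h3]

/-- Periodic extension of a piecewise linear map from a fundamental domain. -/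
theorem exists_periodize {H : ℝ ≃o ℝ} (hH : IsPL H) {a : ℝ} (ha : a ∈ Dy)
    (h : H (a + 1) = H a + 1) : ∃ F ∈ PT, ∀ x, a ≤ x → x ≤ a + 1 → F x = H x := by
  let F0 : ℝ → ℝ := fun x => H (x - ⌊x - a⌋) + ⌊x - a⌋
  have hval : ∀ (n : ℤ) x, a + n ≤ x → x ≤ a + n + 1 → F0 x = H (x - n) + n := by
    intro n x h1 h2
    rcases h2.eq_or_lt with rfl | h2
    · have : ⌊a + n + 1 - a⌋ = n + 1 := by
        rw [Int.floor_eq_iff]; push_cast; constructor <;> linarith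
      simp only [F0, this]
      push_cast
      rw [show a + n + 1 - (n + 1) = a by ring, show a + n + 1 - (n : ℝ) = a + 1 by ring, h]; ring
    · have : ⌊x - a⌋ = n := by
        rw [Int.floor_eq_iff]; constructor <;> linarith
      simp only [F0, this]
  have hfl : ∀ x, a + ⌊x - a⌋ ≤ x ∧ x < a + ⌊x - a⌋ + 1 := fun x =>
    ⟨by linarith [Int.floor_le (x - a)], by linarith [Int.lt_floor_add_one (x - a)]⟩
  have hmono : StrictMono F0 := by
    intro x y hxy
    obtain ⟨x1, x2⟩ := hfl x
    obtain ⟨y1, y2⟩ := hfl y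
    rw [hval _ x x1 x2.le, hval _ y y1 y2.le]
    have hle : ⌊x - a⌋ ≤ ⌊y - a⌋ := Int.floor_le_floor (by linarith)
    rcases hle.eq_or_lt with he | hl
    · rw [← he]
      have := H.strictMono (show x - ⌊x - a⌋ < y - ⌊x - a⌋ by linarith)
      linarith
    · have g1 := H.strictMono (show x - ⌊x - a⌋ < a + 1 by linarith)
      have g2 := H.monotone (show a ≤ y - ⌊y - a⌋ by linarith)
      have g3 : (⌊x - a⌋ : ℝ) + 1 ≤ ⌊y - a⌋ := by exact_mod_cast hl
      linarith
  have hsurj : Function.Surjective F0 := by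
    intro y
    set n := ⌊y - H a⌋ with hn
    have h1 : (n : ℝ) ≤ y - H a := Int.floor_le _
    have h2 : y - H a < n + 1 := Int.lt_floor_add_one _
    refine ⟨H.symm (y - n) + n, ?_⟩
    have g1 : a ≤ H.symm (y - n) := by rw [H.le_symm_apply]; linarith
    have g2 : H.symm (y - n) ≤ a + 1 := by rw [H.symm_apply_le, h]; linarith
    rw [hval n _ (by linarith) (by linarith)]
    simp
  have hR : ∀ (x : ℝ) (n : ℤ) (k : ℤ), a + n ≤ x → x < a + n + 1 → RG H (x - n) k →
      RG F0 x k := by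
    rintro x n k h1 h2 ⟨ε, he, K⟩
    have : RG (fun y => H (y - n) + n) x k := ⟨ε, he, fun y h3 h4 => by
      simp only [K (y - n) (by linarith) (by linarith)]; ring⟩
    exact this.congr h2 fun y h3 h4 => (hval n y (h1.trans h3) h4).symm
  have hL : ∀ (x : ℝ) (n : ℤ) (k : ℤ), a + n < x → x ≤ a + n + 1 → LG H (x - n) k →
      LG F0 x k := by
    rintro x n k h1 h2 ⟨ε, he, K⟩
    have : LG (fun y => H (y - n) + n) x k := ⟨ε, he, fun y h3 h4 => by
      simp only [K (y - n) (by linarith) (by linarith)]; ring⟩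
    exact this.congr h1 fun y h3 h4 => (hval n y h3 (h4.trans h2)).symm
  refine ⟨StrictMono.orderIsoOfSurjective F0 hmono hsurj, ⟨⟨fun x => ?_, fun x hx => ?_⟩,
    fun x => ?_⟩, fun x h1 h2 => ?_⟩
  · change ∃ k l, RG F0 x k ∧ LG F0 x l ∧ (k ≠ l → x ∈ Dy)
    obtain ⟨x1, x2⟩ := hfl x
    set n := ⌊x - a⌋ with hn
    obtain ⟨k, l, a1, a2, a3⟩ := hH.1 (x - n)
    rcases x1.eq_or_lt with he | hl
    · obtain ⟨k', l', b1, b2, b3⟩ := hH.1 (x - (n - 1 : ℤ))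
      refine ⟨k, l', hR x n k x1 x2 a1, hL x (n - 1) l' (by push_cast; linarith)
        (by push_cast; linarith) b2, fun _ => ?_⟩
      rw [← he]; exact Dy.add_mem ha (intCast_mem Dy n)
    · refine ⟨k, l, hR x n k x1 x2 a1, hL x n l hl x2.le a2, fun hkl => ?_⟩
      have := Dy.add_mem (a3 hkl) (intCast_mem Dy n)
      simpa using this
  · exact Dy.add_mem (hH.2 _ (Dy.sub_mem hx (intCast_mem Dy _))) (intCast_mem Dy _)
  · change F0 (x + 1) = F0 x + 1
    obtain ⟨x1, x2⟩ := hfl x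
    rw [hval _ x x1 x2.le, hval (⌊x - a⌋ + 1) (x + 1) (by push_cast; linarith)
      (by push_cast; linarith)]
    push_cast
    rw [show x + 1 - (⌊x - a⌋ + 1) = x - (⌊x - a⌋ : ℝ) by ring]; ring
  · change F0 x = H x
    rw [hval 0 x (by simpa using h1) (by simpa using h2)]; simp

/-- Extension of a piecewise linear map from a short dyadic interval to an element of `PT`. -/
theorem exists_ext {H : ℝ ≃o ℝ} (hH : IsPL H) {a b : ℝ} (ha : a ∈ Dy) (hb : b ∈ Dy)
    (hab : a < b) (hb1 : b < a + 1) (h : H b < H a + 1) :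
    ∃ F ∈ PT, ∀ x, a ≤ x → x ≤ b → F x = H x := by
  obtain ⟨K, k1, k2, k3⟩ := exists_PL_map hb (Dy.add_mem ha Dy.one_mem) (hH.2 b hb)
    (Dy.add_mem (hH.2 a ha) Dy.one_mem) hb1 h
  obtain ⟨L, l1, l2, l3⟩ := exists_glue hH k1 hb k2.symm
  obtain ⟨F, f1, f2⟩ := exists_periodize l1 ha (by rw [l3 _ hb1.le, k3, l2 _ hab.le])
  exact ⟨F, f1, fun x h1 h2 => by rw [f2 x h1 (h2.trans hb1.le), l2 x h2]⟩

theorem exists_ext_aff {k : ℤ} {c a b : ℝ} (hc : c ∈ Dy) (ha : a ∈ Dy) (hb : b ∈ Dy)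
    (hab : a < b) (hb1 : b < a + 1) (h : 2 ^ k * (b - a) < 1) :
    ∃ F ∈ PT, ∀ x, a ≤ x → x ≤ b → F x = 2 ^ k * x + c :=
  exists_ext (isPL_aff k hc) ha hb hab hb1 (by simp only [aff_apply]; linarith)

theorem aff_mem_PT {c : ℝ} (hc : c ∈ Dy) : aff 0 c ∈ PT :=
  ⟨isPL_aff 0 hc, fun x => by simp; ring⟩

/-- An element of `PT` supported in `(a, b) + ℤ` acting as a given piecewise linear map of
`[a, b]`. -/
theorem exists_supp {H : ℝ ≃o ℝ} (hH : IsPL H) {a b : ℝ} (ha : a ∈ Dy) (hb : b ∈ Dy)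
    (hab : a < b) (hb1 : b ≤ a + 1) (h1 : H a = a) (h2 : H b = b) :
    ∃ F ∈ PT, (∀ x, a ≤ x → x ≤ b → F x = H x) ∧ ∀ x, b ≤ x → x ≤ a + 1 → F x = x := by
  obtain ⟨L, l1, l2, l3⟩ := exists_glue hH IsPL.one hb (by simpa using h2)
  obtain ⟨F, f1, f2⟩ := exists_periodize l1 ha (by rw [l3 _ hb1, l2 _ hab.le, h1]; rfl)
  exact ⟨F, f1, fun x h1 h2 => by rw [f2 x h1 (h2.trans hb1), l2 x h2],
    fun x h1 h2 => by rw [f2 x (hab.le.trans h1) h2, l3 x h1]; rfl⟩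

/-- A bump which contracts by `1/2` on the right of `p` and is the identity on `[r, p + 1]`. -/
theorem exists_bump {p r : ℝ} (hp : p ∈ Dy) (hr : r ∈ Dy) (hpr : p < r) (hr1 : r ≤ p + 1) :
    ∃ F ∈ PT, F p = p ∧ RG F p (-1) ∧ ∀ x, r ≤ x → x ≤ p + 1 → F x = x := by
  have hh : ∀ {x : ℝ}, x ∈ Dy → x / 2 ∈ Dy := fun {x} hx => by
    have := zpow_mul_mem_Dy (k := -1).2 hx
    rwa [zpow_neg_one, inv_mul_eq_div] at this
  have hm : (p + r) / 2 ∈ Dy := hh (Dy.add_mem hp hr)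
  have hm1 : p < (p + r) / 2 := by linarith
  have hm2 : (p + r) / 2 < r := by linarith
  have hn : (p + (p + r) / 2) / 2 ∈ Dy := hh (Dy.add_mem hp hm)
  obtain ⟨K, k1, k2, k3⟩ := exists_PL_map hm hr hn hr hm2 (by linarith)
  obtain ⟨L, l1, l2, l3⟩ := exists_glue (isPL_aff (-1) (hh hp)) k1 hm (by
    rw [k2, aff_apply, zpow_neg_one]; ring)
  obtain ⟨F, f1, f2, f3⟩ := exists_supp l1 hp hr hpr hr1
    (by rw [l2 _ hm1.le, aff_apply, zpow_neg_one]; ring) (by rw [l3 _ hm2.le, k3])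
  refine ⟨F, f1, ?_, ?_, f3⟩
  · rw [f2 _ le_rfl hpr.le, l2 _ hm1.le, aff_apply, zpow_neg_one]; ring
  · exact RG.of_eq hm1 (fun y h1 h2 => by rw [f2 _ h1 (h2.trans hm2.le), l2 _ h2, aff_apply])

/-- An element of `PT` supported in `(a, b) + ℤ` carrying `x ∈ (a, b)` into `(c, d) ⊆ (a, b)`. -/
theorem exists_move {a b c d x : ℝ} (ha : a ∈ Dy) (hb : b ∈ Dy) (hax : a < x) (hxb : x < b)
    (hb1 : b ≤ a + 1) (hac : a ≤ c) (hcd : c < d) (hdb : d ≤ b) :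
    ∃ F ∈ PT, F a = a ∧ c < F x ∧ F x < d ∧ ∀ x, b ≤ x → x ≤ a + 1 → F x = x := by
  obtain ⟨u, hu, u1, u2⟩ := exists_Dy_btwn hax
  obtain ⟨v, hv, v1, v2⟩ := exists_Dy_btwn hxb
  obtain ⟨c', hc', c1, c2⟩ := exists_Dy_btwn hcd
  obtain ⟨d', hd', d1, d2⟩ := exists_Dy_btwn c2
  obtain ⟨K, k1, k2, k3⟩ := exists_PL_map ha hu ha hc' u1 (hac.trans_lt c1)
  obtain ⟨L, l1, l2, l3⟩ := exists_PL_map hu hv hc' hd' (u2.trans v1) d1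
  obtain ⟨M, m1, m2, m3⟩ := exists_PL_map hv hb hd' hb v2 (d2.trans_le hdb)
  obtain ⟨P, p1, p2, p3⟩ := exists_glue k1 l1 hu (by rw [k3, l2])
  have huv := u2.trans v1
  obtain ⟨Q, q1, q2, q3⟩ := exists_glue p1 m1 hv (by rw [p3 _ huv.le, l3, m2])
  have Qa : Q a = a := by rw [q2 _ (u1.trans huv).le, p2 _ u1.le, k2]
  obtain ⟨F, f1, f2, f3⟩ := exists_supp q1 ha hb (hax.trans hxb) hb1 Qa
    (by rw [q3 _ v2.le, m3])
  have Qu : Q u = c' := by rw [q2 _ huv.le, p2 _ le_rfl, k3]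
  have Qv : Q v = d' := by rw [q2 _ le_rfl, p3 _ huv.le, l3]
  refine ⟨F, f1, by rw [f2 _ le_rfl (hax.trans hxb).le, Qa], ?_, ?_, f3⟩
  · rw [f2 _ hax.le hxb.le]
    exact c1.trans (Qu ▸ Q.strictMono u2)
  · rw [f2 _ hax.le hxb.le]
    exact lt_trans (Qv ▸ Q.strictMono v1) d2

/-! ### Germs under the normalizer -/

theorem RG.pow {F : ℝ ≃o ℝ} {p : ℝ} {k : ℤ} (hp : F p = p) (h : RG F p k) (n : ℕ) :
    (F ^ n) p = p ∧ RG (F ^ n : ℝ ≃o ℝ) p (n * k) := by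
  induction n with
  | zero => exact ⟨rfl, by
      simpa using RG.of_eq (F := (1 : ℝ ≃o ℝ)) (k := 0) (c := 0) (lt_add_one p)
        (fun y _ _ => by simp)⟩
  | succ n ih =>
    rw [pow_succ']
    refine ⟨by rw [RelIso.mul_apply, ih.1, hp], ?_⟩
    have h' : RG F ((F ^ n) p) k := by rw [ih.1]; exact h
    have := h'.comp ih.2
    rw [show ((n + 1 : ℕ) : ℤ) * k = k + n * k by push_cast; ring]
    exact this

theorem inv_fix {F : ℝ ≃o ℝ} {p : ℝ} (hp : F p = p) : F⁻¹ p = p := by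
  change F.symm p = p; rw [F.symm_apply_eq, hp]

theorem RG.inv_fix {F : ℝ ≃o ℝ} {p : ℝ} {k : ℤ} (hp : F p = p) (h : RG F p k) :
    RG (F⁻¹ : ℝ ≃o ℝ) p (-k) := by
  have := h.inv
  rwa [hp] at this

theorem RG.zpow {F : ℝ ≃o ℝ} {p : ℝ} {k : ℤ} (hp : F p = p) (h : RG F p k) (n : ℤ) :
    (F ^ n) p = p ∧ RG (F ^ n : ℝ ≃o ℝ) p (n * k) := by
  obtain ⟨n, rfl | rfl⟩ := n.eq_nat_or_neg
  · simpa using h.pow hp n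
  · have := (h.pow hp n)
    refine ⟨?_, ?_⟩
    · rw [zpow_neg, zpow_natCast]; exact _root_.inv_fix this.1
    · rw [zpow_neg, zpow_natCast, neg_mul]; exact this.2.inv_fix this.1

/-- `Φ` commutes with integer translations and normalizes `PT`. -/
structure Nrm (Φ : ℝ ≃o ℝ) : Prop where
  h1 : ∀ x, Φ (x + 1) = Φ x + 1
  hn : ∀ F, F ∈ PT ↔ Φ * F * Φ⁻¹ ∈ PT

namespace Nrm

variable {Φ : ℝ ≃o ℝ}

theorem inv (h : Nrm Φ) : Nrm Φ⁻¹ := by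
  refine ⟨fun x => ?_, fun F => ?_⟩
  · change Φ.symm (x + 1) = Φ.symm x + 1
    rw [Φ.symm_apply_eq, h.h1]; simp
  · rw [h.hn (Φ⁻¹ * F * Φ⁻¹⁻¹)]; group

theorem nconj (h : Nrm Φ) : Nrm (nconj Φ) := by
  refine ⟨fun x => ?_, fun F => ?_⟩
  · have := h.h1 (-(x + 1))
    simp only [nconj_apply]
    rw [show -(x + 1) + 1 = -x by ring] at this
    rw [this]; ring
  · have e : ∀ G, G ∈ PT ↔ _root_.nconj G ∈ PT := fun G =>
      ⟨nconj_mem_PT, fun h => by simpa using nconj_mem_PT h⟩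
    rw [e F, h.hn, e]
    simp [nconj_mul, nconj_inv]

theorem star_mem (h : Nrm Φ) {F : ℝ ≃o ℝ} (hF : F ∈ PT) : Φ⁻¹ * F * Φ ∈ PT := by
  simpa using (h.inv.hn F).1 hF

theorem conj_mem (h : Nrm Φ) {F : ℝ ≃o ℝ} (hF : F ∈ PT) : Φ * F * Φ⁻¹ ∈ PT := (h.hn F).1 hF

end Nrm

theorem conj_apply (Φ F : ℝ ≃o ℝ) (x : ℝ) : (Φ * F * Φ⁻¹) (Φ x) = Φ (F x) := by
  change Φ (F (Φ.symm (Φ x))) = _; rw [Φ.symm_apply_apply]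

theorem conj_fix {Φ F : ℝ ≃o ℝ} {p : ℝ} (h : F p = p) : (Φ * F * Φ⁻¹) (Φ p) = Φ p := by
  rw [conj_apply, h]

/-- A topological characterization of dyadic points: some element of the group is the identity
just to the left of the point but not just to the right of it. -/
theorem mem_Dy_iff_germ {p : ℝ} : p ∈ Dy ↔ ∃ F ∈ PT, (∃ a < p, ∀ y, a ≤ y → y ≤ p → F y = y) ∧
    ∀ b > p, ∃ y, p < y ∧ y ≤ b ∧ F y ≠ y := by
  constructor
  · intro hp
    have hh : (1 / 2 : ℝ) ∈ Dy := ⟨1, 1, by norm_num⟩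
    obtain ⟨F, f1, f2, ⟨ε, he, f3⟩, f4⟩ := exists_bump hp (Dy.add_mem hp hh) (by linarith)
      (by linarith)
    refine ⟨F, f1, ⟨p - 1 / 2, by linarith, fun y h1 h2 => ?_⟩, fun b hb => ?_⟩
    · have := f1.2 y
      rw [f4 _ (by linarith) (by linarith)] at this
      linarith
    · have hm : 0 < min ε (b - p) := lt_min he (by linarith)
      refine ⟨p + min ε (b - p), by linarith, by linarith [min_le_right ε (b - p)], ?_⟩
      rw [f3 _ (by linarith) (by linarith [min_le_left ε (b - p)]), f2, zpow_neg_one]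
      intro h; linarith
  · rintro ⟨F, hF, ⟨a, ha, f1⟩, f2⟩
    obtain ⟨k, l, h1, h2, h3⟩ := hF.1.1 p
    have hl : LG F p 0 := LG.of_eq (c := 0) ha fun y h1 h2 => by simp [f1 y h1 h2]
    obtain rfl := h2.unique hl
    apply h3
    rintro rfl
    obtain ⟨ε, he, H⟩ := h1
    obtain ⟨y, y1, y2, y3⟩ := f2 (p + ε) (by linarith)
    exact y3 (by rw [H y y1.le y2, f1 p ha.le le_rfl]; simp)

namespace Nrm

variable {Φ : ℝ ≃o ℝ}

theorem map_Dy (h : Nrm Φ) {p : ℝ} (hp : p ∈ Dy) : Φ p ∈ Dy := by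
  obtain ⟨F, hF, ⟨a, ha, f1⟩, f2⟩ := mem_Dy_iff_germ.1 hp
  refine mem_Dy_iff_germ.2 ⟨_, h.conj_mem hF, ⟨Φ a, Φ.strictMono ha, fun y h1 h2 => ?_⟩,
    fun b hb => ?_⟩
  · obtain ⟨z, rfl⟩ := Φ.surjective y
    rw [conj_apply, f1 z (Φ.le_iff_le.1 h1) (Φ.le_iff_le.1 h2)]
  · obtain ⟨c, rfl⟩ := Φ.surjective b
    obtain ⟨y, y1, y2, y3⟩ := f2 c (Φ.lt_iff_lt.1 hb)
    exact ⟨Φ y, Φ.strictMono y1, Φ.monotone y2, by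
      rw [conj_apply]; exact fun h => y3 (Φ.injective h)⟩

theorem symm_Dy (h : Nrm Φ) {p : ℝ} (hp : p ∈ Dy) : Φ.symm p ∈ Dy := h.inv.map_Dy hp

theorem Dy_iff (h : Nrm Φ) {p : ℝ} : Φ p ∈ Dy ↔ p ∈ Dy :=
  ⟨fun hp => by simpa using h.symm_Dy hp, h.map_Dy⟩

/-- Slope `1` germs are identity germs, hence preserved. -/
theorem RG_zero (Φ : ℝ ≃o ℝ) {F : ℝ ≃o ℝ} {p : ℝ} (hp : F p = p) (hF : RG F p 0) :
    RG (Φ * F * Φ⁻¹ : ℝ ≃o ℝ) (Φ p) 0 := by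
  obtain ⟨ε, he, H⟩ := hF
  refine RG.of_eq (b := Φ (p + ε)) (c := 0) (Φ.strictMono (by linarith)) fun y h1 h2 => ?_
  obtain ⟨z, rfl⟩ := Φ.surjective y
  rw [conj_apply, H z (Φ.le_iff_le.1 h1) (Φ.le_iff_le.1 h2), hp]; simp

/-- The normalizer preserves germ slopes at dyadic fixed points: slopes at a fixed point form
an infinite cyclic group, on which `Φ` induces an isomorphism preserving contractions. -/
theorem RG_conj (h : Nrm Φ) {F : ℝ ≃o ℝ} (hF : F ∈ PT) {p : ℝ} (hp : p ∈ Dy) (hFp : F p = p)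
    {k : ℤ} (hk : RG F p k) : RG (Φ * F * Φ⁻¹ : ℝ ≃o ℝ) (Φ p) k := by
  have hh : (1 / 2 : ℝ) ∈ Dy := ⟨1, 1, by norm_num⟩
  obtain ⟨B, b1, b2, b3, -⟩ := exists_bump hp (Dy.add_mem hp hh) (by linarith) (by linarith)
  obtain ⟨B', c1, c2, c3, -⟩ := exists_bump (h.map_Dy hp) (Dy.add_mem (h.map_Dy hp) hh)
    (by linarith) (by linarith)
  obtain ⟨k0, -, d1, -⟩ := (h.conj_mem b1).1.1 (Φ p)
  have key : ∀ G ∈ PT, G p = p → ∀ m, RG G p m →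
      RG (Φ * G * Φ⁻¹ : ℝ ≃o ℝ) (Φ p) (-(m * k0)) := by
    intro G hG hGp m hm
    obtain ⟨e1, e2⟩ := b3.zpow b2 m
    have e3 : RG (G * B ^ m : ℝ ≃o ℝ) p 0 := by
      have hm' : RG G ((B ^ m) p) m := by rw [e1]; exact hm
      have := hm'.comp e2
      rwa [show m + m * (-1) = 0 by ring] at this
    have e4 := RG_zero Φ (by rw [RelIso.mul_apply, e1, hGp]) e3
    obtain ⟨e5, e6⟩ := d1.zpow (conj_fix b2) (-m)
    have e7 : RG (Φ * (G * B ^ m) * Φ⁻¹ : ℝ ≃o ℝ) (((Φ * B * Φ⁻¹) ^ (-m)) (Φ p)) 0 := by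
      rw [e5]; exact e4
    have e8 : RG ((Φ * (G * B ^ m) * Φ⁻¹) * (Φ * B * Φ⁻¹) ^ (-m) : ℝ ≃o ℝ) (Φ p) _ := e7.comp e6
    have e9 : (Φ * (G * B ^ m) * Φ⁻¹) * (Φ * B * Φ⁻¹) ^ (-m) = Φ * G * Φ⁻¹ := by
      rw [conj_zpow]; group
    rw [e9] at e8
    simpa using e8
  have k1 : k0 = -1 := by
    -- the inverse isomorphism shows that `k0` is a unit
    obtain ⟨m, -, e1, -⟩ := (h.star_mem c1).1.1 p
    have e2 : (Φ⁻¹ * B' * Φ) p = p := by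
      change Φ.symm (B' (Φ p)) = p; rw [c2, Φ.symm_apply_apply]
    have e3 := key _ (h.star_mem c1) e2 m e1
    have e4 : Φ * (Φ⁻¹ * B' * Φ) * Φ⁻¹ = B' := by group
    rw [e4] at e3
    have e5 := c3.unique e3
    have e6 : m * k0 = 1 := by omega
    have e7 : k0 = 1 ∨ k0 = -1 := by
      rcases Int.eq_one_or_neg_one_of_mul_eq_one' e6 with e | e
      · exact Or.inl e.2
      · exact Or.inr e.2
    -- conjugates of contractions contract
    rcases e7 with rfl | e7
    · exfalso
      obtain ⟨ε, he, H⟩ := b3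
      obtain ⟨δ, hd, K⟩ := d1
      have hpos : Φ p < Φ (p + ε) := Φ.strictMono (by linarith)
      set t := min (Φ p + δ) (Φ (p + ε)) with ht
      have t1 : Φ p < t := lt_min (by linarith) hpos
      obtain ⟨z, hz⟩ := Φ.surjective t
      have z1 : p < z := by rw [← Φ.lt_iff_lt, hz]; exact t1
      have z2 : z ≤ p + ε := by rw [← Φ.le_iff_le, hz]; exact min_le_right _ _
      have g1 := H z z1.le z2
      have g2 := K t t1.le (min_le_left _ _)
      rw [← hz, conj_apply, conj_apply, b2] at g2
      have g3 : B z < z := by rw [g1, b2, zpow_neg_one]; linarith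
      have g4 := Φ.strictMono g3
      rw [g2, zpow_one] at g4
      rw [← hz] at t1
      linarith
    · exact e7
  have := key F hF hFp k hk
  rw [k1] at this
  simpa using this

theorem LG_conj (h : Nrm Φ) {F : ℝ ≃o ℝ} (hF : F ∈ PT) {p : ℝ} (hp : p ∈ Dy) (hFp : F p = p)
    {k : ℤ} (hk : LG F p k) : LG (Φ * F * Φ⁻¹ : ℝ ≃o ℝ) (Φ p) k := by
  have := h.nconj.RG_conj (nconj_mem_PT hF) (Dy.neg_mem hp) (by simp [hFp]) (k := k)
    (LG_iff.1 hk)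
  rw [← nconj_mul, ← nconj_inv, ← nconj_mul, nconj_apply, neg_neg] at this
  exact LG_iff.2 this

end Nrm

/-- Dyadic points `y` and `y'` are equivalent if some element of the group carries `y` to `y'`
without break at `y` and such that its conjugate by `Φ⁻¹` has no break at `Φ⁻¹ y`. -/
def EqvDy (Φ : ℝ ≃o ℝ) (y y' : ℝ) : Prop :=
  ∃ F ∈ PT, F y = y' ∧ NB F y ∧ NB (Φ⁻¹ * F * Φ : ℝ ≃o ℝ) (Φ.symm y)

theorem star_apply (Φ F : ℝ ≃o ℝ) (y : ℝ) : (Φ⁻¹ * F * Φ) (Φ.symm y) = Φ.symm (F y) := by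
  change Φ.symm (F (Φ (Φ.symm y))) = _; rw [Φ.apply_symm_apply]

namespace EqvDy

variable {Φ : ℝ ≃o ℝ}

theorem refl (y : ℝ) : EqvDy Φ y y :=
  ⟨1, PT.one_mem, rfl, NB_id y, by
    have e : Φ⁻¹ * 1 * Φ = 1 := by group
    rw [e]; exact NB_id _⟩

theorem symm {y z : ℝ} (h : EqvDy Φ y z) : EqvDy Φ z y := by
  obtain ⟨F, f1, rfl, f3, f4⟩ := h
  refine ⟨F⁻¹, PT.inv_mem f1, F.symm_apply_apply y, f3.inv, ?_⟩
  have := f4.inv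
  rw [star_apply] at this
  have e : Φ⁻¹ * F⁻¹ * Φ = (Φ⁻¹ * F * Φ)⁻¹ := by group
  rw [e]; exact this

theorem trans {x y z : ℝ} (h : EqvDy Φ x y) (h' : EqvDy Φ y z) : EqvDy Φ x z := by
  obtain ⟨F, f1, rfl, f3, f4⟩ := h
  obtain ⟨G, g1, rfl, g3, g4⟩ := h'
  refine ⟨G * F, PT.mul_mem g1 f1, rfl, g3.comp f3, ?_⟩
  rw [← star_apply] at g4
  have e : Φ⁻¹ * (G * F) * Φ = (Φ⁻¹ * G * Φ) * (Φ⁻¹ * F * Φ) := by group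
  rw [e]; exact g4.comp f4

end EqvDy

namespace Nrm

variable {Φ : ℝ ≃o ℝ}

/-- An element whose conjugate has no break at `Φ⁻¹ y` has no break at `y` once `y` and its image
are equivalent. -/
theorem nb_of_eqv (h : Nrm Φ) {F : ℝ ≃o ℝ} (hF : F ∈ PT) {y : ℝ} (hy : y ∈ Dy)
    (hE : EqvDy Φ y (F y)) (hs : NB (Φ⁻¹ * F * Φ : ℝ ≃o ℝ) (Φ.symm y)) : NB F y := by
  obtain ⟨G, g1, g2, g3, g4⟩ := hE
  have hK : (G⁻¹ * F) y = y := by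
    change G.symm (F y) = y; rw [G.symm_apply_eq, g2]
  have g5 := g4.inv
  rw [star_apply, g2, ← star_apply] at g5
  have g6 : NB (Φ⁻¹ * (G⁻¹ * F) * Φ : ℝ ≃o ℝ) (Φ.symm y) := by
    have e : Φ⁻¹ * (G⁻¹ * F) * Φ = (Φ⁻¹ * G * Φ)⁻¹ * (Φ⁻¹ * F * Φ) := by group
    rw [e]; exact g5.comp hs
  obtain ⟨k, k1, k2⟩ := g6
  have hKm := PT.mul_mem (PT.inv_mem g1) hF
  have hfix : (Φ⁻¹ * (G⁻¹ * F) * Φ) (Φ.symm y) = Φ.symm y := by rw [star_apply, hK]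
  have e : Φ * (Φ⁻¹ * (G⁻¹ * F) * Φ) * Φ⁻¹ = G⁻¹ * F := by group
  have l1 := h.RG_conj (h.star_mem hKm) (h.symm_Dy hy) hfix k1
  have l2 := h.LG_conj (h.star_mem hKm) (h.symm_Dy hy) hfix k2
  rw [e, Φ.apply_symm_apply] at l1 l2
  have l3 : NB (G⁻¹ * F : ℝ ≃o ℝ) y := ⟨k, l1, l2⟩
  have g3' : NB G ((G⁻¹ * F) y) := by rw [hK]; exact g3
  have e2 : F = G * (G⁻¹ * F) := by group
  rw [e2]; exact g3'.comp l3

end Nrm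

theorem IsPL.nb_near {F : ℝ ≃o ℝ} (hF : IsPL F) (x : ℝ) :
    ∃ ε > 0, ∀ y, |y - x| < ε → y ≠ x → NB F y := by
  obtain ⟨k, l, ⟨ε, he, H⟩, ⟨δ, hd, K⟩, -⟩ := hF.1 x
  refine ⟨min ε δ, lt_min he hd, fun y hy hyx => ?_⟩
  have h1 := (abs_lt.1 hy).1
  have h2 := (abs_lt.1 hy).2
  have m1 := min_le_left ε δ
  have m2 := min_le_right ε δ
  rcases lt_or_gt_of_ne hyx with h | h
  · exact NB.of_eq (a := x - δ) (b := x) (k := l) (c := F x - 2 ^ l * x) (by linarith) h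
      fun z h3 h4 => by rw [K z h3 h4]; ring
  · exact NB.of_eq (a := x) (b := x + ε) (k := k) (c := F x - 2 ^ k * x) h (by linarith)
      fun z h3 h4 => by rw [H z h3 h4]; ring

theorem PT_add_int {F : ℝ ≃o ℝ} (hF : ∀ x, F (x + 1) = F x + 1) (n : ℤ) (x : ℝ) :
    F (x + n) = F x + n := by
  induction n using Int.induction_on with
  | zero => simp
  | succ n ih => push_cast at ih ⊢; rw [← add_assoc, hF, ih]; ring
  | pred n ih =>
    have := hF (x + (-n - 1 : ℤ))
    push_cast at ih this ⊢
    rw [show x + (-n - 1) + 1 = x + -(n : ℝ) by ring, ih] at this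
    linarith

theorem NB_add_int {F : ℝ ≃o ℝ} (hF : ∀ x, F (x + 1) = F x + 1) {n : ℤ} {x : ℝ}
    (h : NB F x) : NB F (x + n) := by
  have e : (F : ℝ → ℝ) = fun t => (fun s => 2 ^ (0 : ℤ) * s + (n : ℝ)) (F
      ((fun s => 2 ^ (0 : ℤ) * s + -(n : ℝ)) t)) := by
    funext t
    have := PT_add_int hF n (t + -n)
    simp only [zpow_zero, one_mul, neg_add_cancel_right] at this ⊢
    exact this
  rw [e]
  refine NB.comp (NB_affine 0 n _) (NB.comp ?_ (NB_affine 0 (-n) _))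
  simpa using h

/-- Dyadics with denominator dividing `2 ^ m`. -/
def Zl (m : ℕ) : Set ℝ := {x | ∃ a : ℤ, x = a / 2 ^ m}

theorem Zl_mono {m n : ℕ} (h : m ≤ n) : Zl m ⊆ Zl n := by
  rintro _ ⟨a, rfl⟩
  obtain ⟨d, rfl⟩ := Nat.exists_eq_add_of_le h
  exact ⟨a * 2 ^ d, by push_cast; rw [pow_add]; field_simp⟩

theorem Zl_add {m : ℕ} {x y : ℝ} (hx : x ∈ Zl m) (hy : y ∈ Zl m) : x + y ∈ Zl m := by
  obtain ⟨a, rfl⟩ := hx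
  obtain ⟨b, rfl⟩ := hy
  exact ⟨a + b, by push_cast; ring⟩

theorem Zl_int (m : ℕ) (n : ℤ) : (n : ℝ) ∈ Zl m := ⟨n * 2 ^ m, by push_cast; field_simp⟩

theorem odd_level {a b : ℤ} {L m : ℕ} (ha : Odd a) (h : (a : ℝ) / 2 ^ L = b / 2 ^ m) : L ≤ m := by
  by_contra hc
  obtain ⟨d, rfl⟩ : ∃ d, L = m + (d + 1) := ⟨L - m - 1, by omega⟩
  have : (a : ℝ) = b * 2 ^ d * 2 := by
    rw [pow_add, pow_succ] at h
    field_simp at h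
    linarith
  have h2 : a = b * 2 ^ d * 2 := by exact_mod_cast this
  obtain ⟨c, rfl⟩ := ha
  omega

theorem exists_odd {x : ℝ} (hx : x ∈ Dy) : ∃ (a : ℤ) (L : ℕ), x = a / 2 ^ L ∧ (L = 0 ∨ Odd a) := by
  obtain ⟨a, n, rfl⟩ := hx
  induction n generalizing a with
  | zero => exact ⟨a, 0, rfl, Or.inl rfl⟩
  | succ n ih =>
    rcases Int.even_or_odd' a with ⟨b, rfl | rfl⟩
    · obtain ⟨c, L, h1, h2⟩ := ih b
      exact ⟨c, L, by rw [← h1, pow_succ]; push_cast; field_simp, h2⟩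
    · exact ⟨_, n + 1, rfl, Or.inr ⟨b, rfl⟩⟩

/-! ### Equivalence of dyadic points -/

namespace Nrm

variable {Φ : ℝ ≃o ℝ}

/-- The breaks of an element and of its conjugate, the latter transported by `Φ`, are dyadics of
bounded level. -/
theorem exists_breaks (h : Nrm Φ) {F : ℝ ≃o ℝ} (hF : F ∈ PT) :
    ∃ m, ∀ y, y ∉ Zl m → NB F y ∧ NB (Φ⁻¹ * F * Φ : ℝ ≃o ℝ) (Φ.symm y) := by
  have hs := h.star_mem hF
  -- on the compact unit interval there are finitely many exceptional points, all dyadic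
  have hcomp : ∃ m, ∀ y ∈ Set.Icc (0 : ℝ) 1,
      y ∉ Zl m → NB F y ∧ NB (Φ⁻¹ * F * Φ : ℝ ≃o ℝ) (Φ.symm y) := by
    refine isCompact_Icc.induction_on (p := fun S => ∃ m, ∀ y ∈ S,
      y ∉ Zl m → NB F y ∧ NB (Φ⁻¹ * F * Φ : ℝ ≃o ℝ) (Φ.symm y)) ⟨0, by simp⟩ ?_ ?_ ?_
    · rintro S T hST ⟨m, hm⟩
      exact ⟨m, fun y hy => hm y (hST hy)⟩
    · rintro S T ⟨m, hm⟩ ⟨n, hn⟩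
      refine ⟨max m n, fun y hy hyZ => ?_⟩
      rcases hy with hy | hy
      · exact hm y hy fun hz => hyZ (Zl_mono (le_max_left _ _) hz)
      · exact hn y hy fun hz => hyZ (Zl_mono (le_max_right _ _) hz)
    · intro x _
      obtain ⟨ε, he, H⟩ := hF.1.nb_near x
      obtain ⟨δ, hd, K⟩ := hs.1.nb_near (Φ.symm x)
      have hev : ∀ᶠ y in nhds x, |Φ.symm y - Φ.symm x| < δ := by
        have := (Φ.symm.continuous.tendsto x)
        rw [Metric.tendsto_nhds] at this
        exact this δ hd
      have hev2 : ∀ᶠ y in nhds x, |y - x| < ε := Metric.ball_mem_nhds x he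
      have hx : ∃ m, x ∉ Zl m → NB F x ∧ NB (Φ⁻¹ * F * Φ : ℝ ≃o ℝ) (Φ.symm x) := by
        by_cases hxD : x ∈ Dy
        · obtain ⟨a, n, hn⟩ := hxD
          exact ⟨n, fun hc => absurd ⟨a, hn⟩ hc⟩
        · exact ⟨0, fun _ => ⟨hF.1.nb hxD, hs.1.nb fun hc => hxD (by
            simpa using h.map_Dy hc)⟩⟩
      obtain ⟨m, hm⟩ := hx
      refine ⟨_, mem_nhdsWithin_of_mem_nhds (hev.and hev2), m, fun y hy hyZ => ?_⟩
      by_cases hyx : y = x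
      · subst hyx; exact hm hyZ
      · exact ⟨H y hy.2 hyx, K _ hy.1 fun hc => hyx (Φ.symm.injective hc)⟩
  obtain ⟨m, hm⟩ := hcomp
  refine ⟨m, fun y hy => ?_⟩
  have hyf : y = Int.fract y + (⌊y⌋ : ℤ) := (Int.fract_add_floor y).symm
  obtain ⟨g1, g2⟩ := hm (Int.fract y) ⟨Int.fract_nonneg y, (Int.fract_lt_one y).le⟩ (fun hc => hy (by
    rw [hyf]; exact Zl_add hc (Zl_int m _)))
  rw [hyf]
  refine ⟨NB_add_int hF.2 g1, ?_⟩
  rw [show Φ.symm (Int.fract y + (⌊y⌋ : ℤ)) = Φ.symm (Int.fract y) + (⌊y⌋ : ℤ) from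
    PT_add_int h.inv.h1 _ _]
  exact NB_add_int hs.2 g2

/-- An element of `PT` carries each point to an equivalent one, up to dyadics of bounded level. -/
theorem exists_level (h : Nrm Φ) {F : ℝ ≃o ℝ} (hF : F ∈ PT) :
    ∃ m, ∀ y, y ∉ Zl m → EqvDy Φ y (F y) := by
  obtain ⟨m, hm⟩ := h.exists_breaks hF
  exact ⟨m, fun y hy => ⟨F, hF, rfl, hm y hy⟩⟩

/-- Equivalence of dyadics of high level depends only on their numerators, through a
congruence modulo a power of two. -/
theorem exists_congr (h : Nrm Φ) : ∃ L0 M : ℕ, 2 ≤ L0 ∧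
    (∀ (a : ℤ) (L : ℕ), Odd a → L0 ≤ L → EqvDy Φ (a / 2 ^ L) (a / 2 ^ L0)) ∧
    ∀ a b : ℤ, Odd a → Odd b → (2 : ℤ) ^ M ∣ a - b →
      EqvDy Φ (a / 2 ^ L0) (b / 2 ^ L0) := by
  have h4 : (1 / 4 : ℝ) ∈ Dy := ⟨1, 2, by norm_num⟩
  obtain ⟨m1, hm1⟩ := h.exists_level (aff_mem_PT h4)
  obtain ⟨F, hF, hF2⟩ := exists_ext_aff (k := 1) Dy.zero_mem Dy.zero_mem h4 (by norm_num)
    (by norm_num) (by norm_num)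
  obtain ⟨m2, hm2⟩ := h.exists_level hF
  set m := max (max m1 m2) 2 with hm
  have q2 : 2 ≤ m := le_max_right _ _
  have hm1' : ∀ y, y ∉ Zl m → EqvDy Φ y (y + 1 / 4) := fun y hy => by
    have := hm1 y fun hc => hy (Zl_mono ((le_max_left _ _).trans (le_max_left _ _)) hc)
    simpa using this
  have hm2' : ∀ y, y ∉ Zl m → 0 ≤ y → y ≤ 1 / 4 → EqvDy Φ y (2 * y) := fun y hy h1 h2 => by
    have := hm2 y fun hc => hy (Zl_mono ((le_max_right _ _).trans (le_max_left _ _)) hc)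
    rw [hF2 y h1 h2] at this
    simpa using this
  have hZ4 : ∀ n : ℤ, (n / 4 : ℝ) ∈ Zl m := fun n => Zl_mono q2 ⟨n, by norm_num⟩
  have hq : ∀ (n : ℤ) y, y ∉ Zl m → EqvDy Φ y (y + n / 4) := by
    have hn : ∀ (n : ℕ) y, y ∉ Zl m → EqvDy Φ y (y + n / 4) := by
      intro n
      induction n with
      | zero => intro y _; simpa using EqvDy.refl y
      | succ n ih =>
        intro y hy
        refine (ih y hy).trans ?_
        have := hm1' (y + n / 4) fun hc => hy (by
          have := Zl_add hc (hZ4 (-n)); push_cast at this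
          rwa [show y + n / 4 + -n / 4 = y by ring] at this)
        push_cast
        rwa [show y + n / 4 + 1 / 4 = y + ((n : ℝ) + 1) / 4 by ring] at this
    intro n y hy
    obtain ⟨k, rfl | rfl⟩ := n.eq_nat_or_neg
    · rw [Int.cast_natCast]; exact hn k y hy
    · have := hn k (y + (-k : ℤ) / 4) fun hc => hy (by
          have := Zl_add hc (hZ4 k); push_cast at this
          rwa [show y + -k / 4 + k / 4 = y by ring] at this)
      push_cast at this ⊢
      rw [show y + -k / 4 + k / 4 = y by ring] at this
      exact this.symm
  have hodd : ∀ (a : ℤ) (L : ℕ), Odd a → m < L → (a / 2 ^ L : ℝ) ∉ Zl m := by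
    rintro a L ha hL ⟨b, hb⟩
    have := odd_level ha hb
    omega
  have hdbl : ∀ y, 2 * y ∉ Zl m → EqvDy Φ y (2 * y) := by
    intro y hy
    have hy1 : y ∉ Zl m := fun hc => hy (by rw [two_mul]; exact Zl_add hc hc)
    set n := ⌊4 * y⌋ with hn
    have n1 := Int.floor_le (4 * y)
    have n2 := Int.lt_floor_add_one (4 * y)
    have hy2 : y + (-n : ℤ) / 4 ∉ Zl m := fun hc => hy1 (by
      have := Zl_add hc (hZ4 n); push_cast at this
      rwa [show y + -n / 4 + n / 4 = y by ring] at this)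
    have e1 := hq (-n) y hy1
    have e2 := hm2' _ hy2 (by push_cast; linarith) (by push_cast; linarith)
    have e3 := hq (-2 * n) (2 * y) hy
    push_cast at e1 e2 e3
    rw [show 2 * (y + -n / 4) = 2 * y + -2 * n / 4 by ring] at e2
    exact (e1.trans e2).trans e3.symm
  refine ⟨m + 1, m - 1, by omega, ?_, ?_⟩
  · intro a L ha hL
    induction L, hL using Nat.le_induction with
    | base => exact EqvDy.refl _
    | succ L hL ih =>
      have e : (2 * (a / 2 ^ (L + 1)) : ℝ) = a / 2 ^ L := by rw [pow_succ]; field_simp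
      have := hdbl (a / 2 ^ (L + 1)) (by rw [e]; exact hodd a L ha (by omega))
      rw [e] at this
      exact this.trans ih
  · rintro a b ha hb ⟨c, hc⟩
    have e : (b / 2 ^ (m + 1) : ℝ) = a / 2 ^ (m + 1) + (-c : ℤ) / 4 := by
      obtain ⟨d, hd⟩ := Nat.exists_eq_add_of_le q2
      have hb' : b = a - 2 ^ (d + 1) * c := by
        rw [hd, show 2 + d - 1 = d + 1 by omega] at hc; linarith
      rw [hb', hd]; push_cast
      rw [show 2 + d + 1 = d + 1 + 2 by ring, pow_add]; field_simp; ring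
    rw [e]
    exact hq _ _ (hodd a _ ha (by omega))

/-- The two possible shapes of the equivalence relation at high levels. -/
theorem exists_cases (h : Nrm Φ) : ∃ L0 : ℕ, 2 ≤ L0 ∧
    ((∀ (a b : ℤ) (L L' : ℕ), Odd a → Odd b → L0 ≤ L → L0 ≤ L' →
      EqvDy Φ (a / 2 ^ L) (b / 2 ^ L')) ∨
    ∃ (M : ℕ) (s : ℤ), 1 ≤ M ∧ 0 < s ∧ s < 2 ^ M ∧
      ∀ (j j' : ℤ) (L L' : ℕ), L0 ≤ L → L0 ≤ L' →
        EqvDy Φ ((2 ^ M * j + s : ℤ) / 2 ^ L) ((2 ^ M * j' + s : ℤ) / 2 ^ L') →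
          (Even j ↔ Even j')) := by
  classical
  obtain ⟨L0, M0, hL0, hlev, hM0⟩ := h.exists_congr
  refine ⟨L0, hL0, ?_⟩
  have hex : ∃ M : ℕ, ∀ a b : ℤ, Odd a → Odd b → (2 : ℤ) ^ M ∣ a - b →
      EqvDy Φ (a / 2 ^ L0) (b / 2 ^ L0) := ⟨M0, hM0⟩
  set N := Nat.find hex with hN
  have hspec := Nat.find_spec hex
  rw [← hN] at hspec
  rcases le_or_gt N 1 with hN1 | hN1
  · left
    intro a b L L' ha hb hL hL'
    refine (hlev a L ha hL).trans ((hspec a b ha hb ?_).trans (hlev b L' hb hL').symm)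
    exact (pow_dvd_pow 2 hN1).trans (by simpa using (ha.sub_odd hb).two_dvd)
  · right
    obtain ⟨M, hM⟩ : ∃ M, N = M + 1 := ⟨N - 1, by omega⟩
    have hmin := Nat.find_min hex (m := M) (by omega)
    push Not at hmin
    obtain ⟨a, b, ha, hb, hdvd, hne⟩ := hmin
    have hMpos : 1 ≤ M := by omega
    have h2M : (2 : ℤ) ∣ 2 ^ M := dvd_pow_self 2 (by omega)
    have hpos : (0 : ℤ) < 2 ^ M := by positivity
    set s := a % 2 ^ M with hs
    have ea : a = 2 ^ M * (a / 2 ^ M) + s := (Int.mul_ediv_add_emod a _).symm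
    have hbs : b % 2 ^ M = s := ((Int.emod_emod_of_dvd _ dvd_rfl).symm.trans
      (Int.emod_emod_of_dvd _ dvd_rfl)).trans (Int.ModEq.symm
        ((Int.modEq_iff_dvd.2 (by rw [← neg_sub]; exact (dvd_neg.2 hdvd))).symm)).symm
    have eb : b = 2 ^ M * (b / 2 ^ M) + s := by rw [← hbs]; exact (Int.mul_ediv_add_emod b _).symm
    have hsodd : Odd s := by
      rcases Int.even_or_odd s with hse | hso
      · exfalso
        have : Even a := by
          rw [ea]; exact (even_iff_two_dvd.2 (h2M.mul_right _)).add hse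
        exact (Int.not_even_iff_odd.2 ha) this
      · exact hso
    have hs0 : 0 ≤ s := Int.emod_nonneg _ hpos.ne'
    have hs1 : s < 2 ^ M := Int.emod_lt_of_pos _ hpos
    have hnum : ∀ j : ℤ, Odd (2 ^ M * j + s) := fun j =>
      (even_iff_two_dvd.2 (h2M.mul_right _)).add_odd hsodd
    refine ⟨M, s, hMpos, ?_, hs1, ?_⟩
    · rcases hs0.eq_or_lt with h0 | h0
      · rw [← h0] at hsodd; simp at hsodd
      · exact h0
    have hpar : ∀ i j : ℤ, (Even i ↔ Even j) →
        EqvDy Φ ((2 ^ M * i + s : ℤ) / 2 ^ L0) ((2 ^ M * j + s : ℤ) / 2 ^ L0) := by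
      intro i j hij
      refine hspec _ _ (hnum i) (hnum j) ?_
      obtain ⟨c, hc⟩ := (Int.even_sub.2 hij).two_dvd
      rw [hM, pow_succ]
      exact ⟨c, by linear_combination 2 ^ M * hc⟩
    have hdiff : ¬ (Even (a / 2 ^ M) ↔ Even (b / 2 ^ M)) := fun hc => hne (by
      have := hpar _ _ hc
      rwa [← ea, ← eb] at this)
    intro j j' L L' hL hL' hE
    have hE' := ((hlev _ L (hnum j) hL).symm.trans hE).trans (hlev _ L' (hnum j') hL')
    by_contra hjj
    apply hne
    have e1 : ∀ i, (Even (a / 2 ^ M) ↔ Even i) → EqvDy Φ (a / 2 ^ L0) ((2 ^ M * i + s : ℤ) / 2 ^ L0) :=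
      fun i hi => by have := hpar _ _ hi; rwa [← ea] at this
    have e2 : ∀ i, (Even i ↔ Even (b / 2 ^ M)) → EqvDy Φ ((2 ^ M * i + s : ℤ) / 2 ^ L0) (b / 2 ^ L0) :=
      fun i hi => by have := hpar _ _ hi; rwa [← eb] at this
    by_cases hc : (Even (a / 2 ^ M) ↔ Even j)
    · exact (e1 j hc).trans (hE'.trans (e2 j' (by tauto)))
    · exact (e1 j' (by tauto)).trans (hE'.symm.trans (e2 j (by tauto)))

end Nrm

/-! ### Dyadic intervals mapped to dyadic intervals -/

namespace Nrm

variable {Φ : ℝ ≃o ℝ}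

theorem exists_odd_small {y : ℝ} {L0 : ℕ} (hy : y ∈ Dy) (h0 : 0 < y) (h1 : y < 1 / 2 ^ L0) :
    ∃ (a : ℤ) (L : ℕ), Odd a ∧ L0 ≤ L ∧ y = a / 2 ^ L := by
  obtain ⟨a, L, rfl, h⟩ := exists_odd hy
  have hp : (0 : ℝ) < 2 ^ L := by positivity
  have ha : (0 : ℝ) < a := (div_pos_iff_of_pos_right hp).1 h0
  have ha1 : (1 : ℝ) ≤ a := by
    have : 0 < a := by exact_mod_cast ha
    exact_mod_cast this
  have h2 : (1 : ℝ) / 2 ^ L < 1 / 2 ^ L0 := lt_of_le_of_lt (by gcongr) h1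
  have h3 : L0 < L := by
    rw [one_div_lt_one_div hp (by positivity)] at h2
    exact (pow_lt_pow_iff_right₀ (by norm_num)).1 h2
  refine ⟨a, L, h.resolve_left (by omega), h3.le, rfl⟩

/-- `g` maps the `j`-th dyadic interval `[j / 2 ^ m, (j + 1) / 2 ^ m]` of level `m` affinely onto a
dyadic interval of level at least `L0`. -/
def Good (g : ℝ → ℝ) (L0 : ℕ) (j : ℤ) (m : ℕ) : Prop :=
  ∃ (j' : ℤ) (m' : ℕ), L0 ≤ m' ∧ ∀ x : ℝ, 0 ≤ x → x ≤ 1 → g ((j + x) / 2 ^ m) = (j' + x) / 2 ^ m'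

theorem J_bound {j : ℤ} {m L0 : ℕ} (hm : L0 ≤ m) (h1 : j < 2 ^ (m - L0)) {x : ℝ} (hx : x ≤ 1) :
    ((j : ℝ) + x) / 2 ^ m ≤ 1 / 2 ^ L0 := by
  obtain ⟨d, rfl⟩ := Nat.exists_eq_add_of_le hm
  rw [Nat.add_sub_cancel_left] at h1
  have h2 : ((j + 1 : ℤ) : ℝ) ≤ (2 ^ d : ℤ) := by exact_mod_cast h1
  push_cast at h2
  rw [pow_add, div_le_div_iff₀ (by positivity) (by positivity)]
  have := two_zpow_pos L0
  rw [zpow_natCast] at this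
  nlinarith

/-- All sufficiently fine dyadic subintervals of `[0, 2 ^ (-L0)]` are good. -/
theorem eventually_good {g : ℝ ≃o ℝ} (hg : g ∈ PT) {L0 : ℕ}
    (hJ : ∀ x, 0 ≤ x → x ≤ 1 / 2 ^ L0 → 0 ≤ g x ∧ g x ≤ 1 / 2 ^ L0) :
    ∀ᶠ m : ℕ in Filter.atTop, ∀ j : ℤ, 0 ≤ j → j < 2 ^ (m - L0) → Good g L0 j m := by
  obtain ⟨m1, hm1⟩ : ∃ m1 : ℕ, ∀ y, y ∉ Zl m1 → NB g y := by
    have h : Nrm (1 : ℝ ≃o ℝ) := ⟨fun x => rfl, fun F => by simp⟩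
    obtain ⟨m, hm⟩ := h.exists_breaks hg
    exact ⟨m, fun y hy => (hm y hy).1⟩
  set n := max m1 L0 with hn
  have hn1 : m1 ≤ n := le_max_left _ _
  have hn2 : L0 ≤ n := le_max_right _ _
  -- each interval of level `n` carries an affine map, with dyadic data
  have hpiece : ∀ i : ℤ, ∃ (k : ℤ) (c : ℝ), c ∈ Dy ∧ ∀ x, (i : ℝ) / 2 ^ n ≤ x → x ≤ (i + 1 : ℝ) / 2 ^ n →
      g x = 2 ^ k * x + c := by
    intro i
    have hp : (0 : ℝ) < 2 ^ n := by positivity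
    have hlt : (i : ℝ) / 2 ^ n < (i + 1 : ℝ) / 2 ^ n := by gcongr; linarith
    obtain ⟨k, c, hc⟩ := affine_of_NB (F := g) hlt (fun x h1 h2 => hm1 x fun hx => by
      obtain ⟨a, rfl⟩ := Zl_mono hn1 hx
      rw [div_lt_div_iff_of_pos_right hp] at h1 h2
      have h1' : i < a := by exact_mod_cast h1
      have h2' : a < i + 1 := by exact_mod_cast h2
      omega)
    refine ⟨k, c, ?_, hc⟩
    have hi : (i : ℝ) / 2 ^ n ∈ Dy := ⟨i, n, rfl⟩
    have := Dy.sub_mem (hg.1.2 _ hi) (zpow_mul_mem_Dy (k := k).2 hi)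
    rw [hc _ le_rfl hlt.le, add_sub_cancel_left] at this
    exact this
  have hev : ∀ᶠ m : ℕ in Filter.atTop, ∀ i ∈ Finset.Ico (0 : ℤ) (2 ^ n), ∀ j : ℤ,
      0 ≤ j → j < 2 ^ (m - L0) → i * 2 ^ (m - n) ≤ j → j < (i + 1) * 2 ^ (m - n) →
      Good g L0 j m := by
    rw [Filter.eventually_all_finset]
    intro i _
    obtain ⟨k, c, ⟨a, N, rfl⟩, hc⟩ := hpiece i
    filter_upwards [Filter.eventually_ge_atTop n, Filter.eventually_ge_atTop (N + k.toNat)] with m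
      hmn hmN j hj0 hj1 hij1 hij2
    obtain ⟨d, rfl⟩ := Nat.exists_eq_add_of_le hmn
    rw [Nat.add_sub_cancel_left] at hij1 hij2
    have hpn : (0 : ℝ) < 2 ^ n := by positivity
    have hpd : (0 : ℝ) < 2 ^ d := by positivity
    have hij1' : (i : ℝ) * 2 ^ d ≤ j := by exact_mod_cast hij1
    have hij2' : (j : ℝ) + 1 ≤ (i + 1) * 2 ^ d := by exact_mod_cast hij2
    have hval : ∀ x : ℝ, 0 ≤ x → x ≤ 1 →
        g ((j + x) / 2 ^ (n + d)) = 2 ^ k * ((j + x) / 2 ^ (n + d)) + a / 2 ^ N := by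
      intro x h0 h1
      apply hc
      · rw [pow_add, div_le_div_iff₀ hpn (by positivity)]; nlinarith
      · rw [pow_add, div_le_div_iff₀ (by positivity) hpn]; nlinarith
    obtain ⟨m', hm'⟩ : ∃ m' : ℕ, (m' : ℤ) = (n + d : ℕ) - k := ⟨((n + d : ℕ) - k).toNat, by omega⟩
    have hNm : N ≤ m' := by omega
    obtain ⟨e, he⟩ := Nat.exists_eq_add_of_le hNm
    have hk : (2 : ℝ) ^ k = 2 ^ (n + d) / 2 ^ m' := by
      rw [eq_div_iff (by positivity), ← zpow_natCast, ← zpow_natCast, ← zpow_add₀ two_ne_zero]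
      congr 1; omega
    have hval2 : ∀ x : ℝ, 0 ≤ x → x ≤ 1 →
        g ((j + x) / 2 ^ (n + d)) = ((j + a * 2 ^ e : ℤ) + x) / 2 ^ m' := by
      intro x h0 h1
      rw [hval x h0 h1, hk]
      push_cast
      rw [he, pow_add]; field_simp; ring
    refine ⟨_, m', ?_, hval2⟩
    have b0 := hJ ((j + 0) / 2 ^ (n + d)) (by positivity) (J_bound (by omega) hj1 (by norm_num))
    have b1 := hJ ((j + 1) / 2 ^ (n + d)) (by positivity) (J_bound (by omega) hj1 (by norm_num))
    rw [hval2 _ (by norm_num) (by norm_num)] at b0 b1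
    have : (1 : ℝ) / 2 ^ m' ≤ 1 / 2 ^ L0 := by
      have := b0.1
      have h2 := b1.2
      rw [add_div] at h2 this
      rw [zero_div] at this
      linarith
    rw [one_div_le_one_div (by positivity) (by positivity)] at this
    exact (pow_le_pow_iff_right₀ (by norm_num)).1 this
  filter_upwards [hev, Filter.eventually_ge_atTop n] with m hm hmn j hj0 hj1
  have hq : (0 : ℤ) < 2 ^ (m - n) := by positivity
  refine hm (j / 2 ^ (m - n)) ?_ j hj0 hj1 (Int.ediv_mul_le _ hq.ne') ?_
  · rw [Finset.mem_Ico]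
    refine ⟨Int.ediv_nonneg hj0 hq.le, Int.ediv_lt_of_lt_mul hq (hj1.trans_le ?_)⟩
    rw [← pow_add]
    exact pow_le_pow_right₀ (by norm_num) (by omega)
  · exact Int.lt_ediv_add_one_mul_self j hq

/-- Merging two adjacent good intervals: the parity condition forces the images to be the two
halves of a dyadic interval. -/
theorem good_step {g : ℝ ≃o ℝ} (hg : g ∈ PT) {L0 M : ℕ} {s : ℤ} (hs0 : 0 < s)
    (hs1 : s < 2 ^ M)
    (hpar : ∀ (j j' : ℤ) (L L' : ℕ), L0 ≤ L → L0 ≤ L' →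
        EqvDy Φ ((2 ^ M * j + s : ℤ) / 2 ^ L) ((2 ^ M * j' + s : ℤ) / 2 ^ L') →
          (Even j ↔ Even j'))
    (hJ : ∀ x, 0 ≤ x → x ≤ 1 / 2 ^ L0 → 0 ≤ g x ∧ g x ≤ 1 / 2 ^ L0)
    (hnb : ∀ y, 0 < y → y < 1 / 2 ^ L0 → NB (Φ⁻¹ * g * Φ : ℝ ≃o ℝ) (Φ.symm y))
    {m : ℕ} (hm : L0 ≤ m) {j : ℤ} (hj0 : 0 ≤ j) (hj1 : j < 2 ^ (m - L0))
    (h0 : Good g L0 (2 * j) (m + 1)) (h1 : Good g L0 (2 * j + 1) (m + 1)) : Good g L0 j m := by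
  have hpM : (0 : ℝ) < 2 ^ M := by positivity
  have hs0' : (0 : ℝ) < s := by exact_mod_cast hs0
  have hs1' : (s : ℝ) < 2 ^ M := by exact_mod_cast hs1
  have ht1 : (s : ℝ) / 2 ^ M < 1 := (div_lt_one hpM).2 hs1'
  have ht0 : 0 < (s : ℝ) / 2 ^ M := by positivity
  -- parity of good intervals
  have key : ∀ i j' : ℤ, ∀ m' : ℕ, L0 ≤ m' → 0 ≤ i → i < 2 ^ (m + 1 - L0) →
      (∀ x : ℝ, 0 ≤ x → x ≤ 1 → g ((i + x) / 2 ^ (m + 1)) = (j' + x) / 2 ^ m') →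
      (Even i ↔ Even j') := by
    intro i j' m' hm' hi0 hi1 hx
    have hi0' : (0 : ℝ) ≤ i := by exact_mod_cast hi0
    apply hpar i j' (M + (m + 1)) (M + m') (by omega) (by omega)
    have e1 : (((2 ^ M * i + s : ℤ) : ℝ) / 2 ^ (M + (m + 1))) = (i + s / 2 ^ M) / 2 ^ (m + 1) := by
      push_cast; rw [pow_add]; field_simp
    have e2 : (((2 ^ M * j' + s : ℤ) : ℝ) / 2 ^ (M + m')) = (j' + s / 2 ^ M) / 2 ^ m' := by
      push_cast; rw [pow_add]; field_simp
    rw [e1, e2, ← hx _ ht0.le ht1.le]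
    refine ⟨g, hg, rfl, ?_, hnb _ (by positivity) (lt_of_lt_of_le ?_
      (J_bound (by omega) hi1 le_rfl))⟩
    · have hk : (2 : ℝ) ^ ((m + 1 : ℕ) - m' : ℤ) = 2 ^ (m + 1) / 2 ^ m' := by
        rw [zpow_sub₀ two_ne_zero, zpow_natCast, zpow_natCast]
      refine NB.of_eq (a := (i + 0) / 2 ^ (m + 1)) (b := (i + 1) / 2 ^ (m + 1))
        (k := (m + 1 : ℕ) - m') (c := j' / 2 ^ m' - 2 ^ ((m + 1 : ℕ) - m' : ℤ) * (i / 2 ^ (m + 1)))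
        (by gcongr) (by gcongr) fun y y1 y2 => ?_
      have hy : y = (i + (y * 2 ^ (m + 1) - i)) / 2 ^ (m + 1) := by field_simp; ring
      rw [div_le_iff₀ (by positivity)] at y1
      rw [le_div_iff₀ (by positivity)] at y2
      have := hx (y * 2 ^ (m + 1) - i) (by linarith) (by linarith)
      rw [← hy] at this
      rw [this, hk]; field_simp; ring
    · gcongr
  have hlen : (2 : ℤ) ^ (m + 1 - L0) = 2 * 2 ^ (m - L0) := by
    rw [show m + 1 - L0 = m - L0 + 1 by omega, pow_succ]; ring
  obtain ⟨j0, m0, hm0, k0⟩ := h0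
  obtain ⟨j1, m1, hm1, k1⟩ := h1
  have p0 := (key _ _ _ hm0 (by omega) (by omega) k0).1 (even_two_mul j)
  have p1 : ¬ Even j1 := fun hc => by
    have := (key _ _ _ hm1 (by omega) (by omega) k1).2 hc
    rw [Int.even_add_one] at this
    exact this (even_two_mul j)
  have hc0 := k0 1 (by norm_num) le_rfl
  have hc1 := k1 0 le_rfl (by norm_num)
  have e : ((2 * j : ℤ) + 1 : ℝ) = (2 * j + 1 : ℤ) + 0 := by push_cast; ring
  rw [e, hc1] at hc0
  have o0 : Odd (j0 + 1) := p0.add_one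
  have o1 : Odd j1 := Int.not_even_iff_odd.1 p1
  have hc2 : (j1 : ℝ) / 2 ^ m1 = (j0 + 1 : ℤ) / 2 ^ m0 := by push_cast; simpa using hc0
  obtain rfl : m1 = m0 := le_antisymm (odd_level o1 hc2) (odd_level o0 hc2.symm)
  have hj1' : j1 = j0 + 1 := by
    rw [div_left_inj' (by positivity)] at hc2
    exact_mod_cast hc2
  subst hj1'
  obtain ⟨r, rfl⟩ := p0
  have hj0' : (0 : ℝ) ≤ j := by exact_mod_cast hj0
  have hfull : ∀ x : ℝ, 0 ≤ x → x ≤ 1 → g ((j + x) / 2 ^ m) = 2 * (r + x) / 2 ^ m1 := by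
    intro x x0 x1
    rcases le_total x (1 / 2) with hx | hx
    · have := k0 (2 * x) (by linarith) (by linarith)
      have e : ((2 * j : ℤ) + 2 * x : ℝ) / 2 ^ (m + 1) = (j + x) / 2 ^ m := by
        push_cast; rw [pow_succ]; field_simp
      rw [e] at this
      rw [this]; push_cast; ring
    · have := k1 (2 * x - 1) (by linarith) (by linarith)
      have e : ((2 * j + 1 : ℤ) + (2 * x - 1) : ℝ) / 2 ^ (m + 1) = (j + x) / 2 ^ m := by
        push_cast; rw [pow_succ]; field_simp; ring
      rw [e] at this
      rw [this]; push_cast; ring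
  have b0 := hJ ((j + 0) / 2 ^ m) (by positivity) (J_bound hm hj1 (by norm_num))
  have b1 := hJ ((j + 1) / 2 ^ m) (by positivity) (J_bound hm hj1 (by norm_num))
  rw [hfull _ (by norm_num) (by norm_num)] at b0 b1
  have hlev : (2 : ℝ) / 2 ^ m1 ≤ 1 / 2 ^ L0 := by
    have h1 := b0.1
    have h2 := b1.2
    rw [mul_add, add_div] at h1 h2
    simp only [mul_zero, zero_div, add_zero, mul_one] at h1 h2
    linarith
  have hlev2 : L0 + 1 ≤ m1 := by
    rw [div_le_div_iff₀ (by positivity) (by positivity), one_mul, mul_comm, ← pow_succ] at hlev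
    exact (pow_le_pow_iff_right₀ (by norm_num)).1 hlev
  obtain ⟨m2, rfl⟩ : ∃ m2, m1 = m2 + 1 := ⟨m1 - 1, by omega⟩
  refine ⟨r, m2, by omega, fun x x0 x1 => ?_⟩
  rw [hfull x x0 x1, pow_succ]; field_simp

end Nrm

/-! ### The normalizer of `PT` -/

namespace Nrm

variable {Φ : ℝ ≃o ℝ}

/-- There is a short dyadic interval on which any self-map from the group is affine as soon as its
conjugate has no break on the preimage of that interval. -/
theorem exists_affine (h : Nrm Φ) : ∃ L0 : ℕ, 2 ≤ L0 ∧ ∀ g ∈ PT,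
    (∀ x, 0 ≤ x → x ≤ 1 / 2 ^ L0 → 0 ≤ g x ∧ g x ≤ 1 / 2 ^ L0) →
    (∀ y, 0 < y → y < 1 / 2 ^ L0 → NB (Φ⁻¹ * g * Φ : ℝ ≃o ℝ) (Φ.symm y)) →
    ∃ (k : ℤ) (c : ℝ), ∀ x, 0 ≤ x → x ≤ 1 / 2 ^ L0 → g x = 2 ^ k * x + c := by
  obtain ⟨L0, hL0, hcase⟩ := h.exists_cases
  refine ⟨L0, hL0, fun g hg hJ hnb => ?_⟩
  have hpos : (0 : ℝ) < 1 / 2 ^ L0 := by positivity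
  rcases hcase with hall | ⟨M, s, hM, hs0, hs1, hpar⟩
  -- all high level dyadics are equivalent, so breaks are excluded one by one
  · refine affine_of_NB hpos fun y h1 h2 => ?_
    by_cases hy : y ∈ Dy
    · refine h.nb_of_eqv hg hy ?_ (hnb y h1 h2)
      have h3 : 0 < g y := (hJ 0 le_rfl hpos.le).1.trans_lt (g.strictMono h1)
      have h4 : g y < 1 / 2 ^ L0 := (g.strictMono h2).trans_le (hJ _ hpos.le le_rfl).2
      obtain ⟨a, L, ha, hL, e⟩ := exists_odd_small hy h1 h2
      obtain ⟨b, L', hb, hL', e'⟩ := exists_odd_small (hg.1.2 y hy) h3 h4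
      rw [e', e]
      exact hall a b L L' ha hb hL hL'
    · exact hg.1.nb hy
  -- parity case: good intervals of a fine level are merged down to the level `L0`
  · have hev := eventually_good hg hJ
    obtain ⟨m1, hm1⟩ := Filter.eventually_atTop.1 hev
    have hdown : ∀ d : ℕ, ∀ m : ℕ, L0 ≤ m → m1 ≤ m + d →
        ∀ j : ℤ, 0 ≤ j → j < 2 ^ (m - L0) → Good g L0 j m := by
      intro d
      induction d with
      | zero => intro m _ hmd; exact hm1 m (by simpa using hmd)
      | succ d ih =>
        intro m hm hmd j hj0 hj1
        have hlen : (2 : ℤ) ^ (m + 1 - L0) = 2 * 2 ^ (m - L0) := by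
          rw [show m + 1 - L0 = m - L0 + 1 by omega, pow_succ]; ring
        exact good_step hg hs0 hs1 hpar hJ hnb hm hj0 hj1
          (ih (m + 1) (by omega) (by omega) _ (by omega) (by omega))
          (ih (m + 1) (by omega) (by omega) _ (by omega) (by omega))
    obtain ⟨j', m', -, hx⟩ := hdown m1 L0 le_rfl (by omega) 0 le_rfl (by positivity)
    refine ⟨L0 - m', j' / 2 ^ m', fun x x0 x1 => ?_⟩
    rw [le_div_iff₀ (by positivity)] at x1
    have := hx (x * 2 ^ L0) (by positivity) x1
    have e : ((0 : ℤ) + x * 2 ^ L0 : ℝ) / 2 ^ L0 = x := by push_cast; field_simp; ring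
    rw [e] at this
    rw [this, zpow_sub₀ two_ne_zero, zpow_natCast, zpow_natCast]; field_simp; ring

/-- A continuous function satisfying the two halving equations vanishes. -/
theorem eq_zero_of_halving {δ : ℝ → ℝ} {p q : ℝ} (hpq : p < q) (hc : ContinuousOn δ (Set.Icc p q))
    (h0 : ∀ x ∈ Set.Icc p q, δ ((x + p) / 2) = δ x / 2)
    (h1 : ∀ x ∈ Set.Icc p q, δ ((x + q) / 2) = δ x / 2) : ∀ x ∈ Set.Icc p q, δ x = 0 := by
  obtain ⟨x0, hx0, hmax⟩ := isCompact_Icc.exists_isMaxOn (Set.nonempty_Icc.2 hpq.le) hc.abs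
  have hle : |δ x0| ≤ |δ x0| / 2 := by
    rcases le_total x0 ((p + q) / 2) with hx | hx
    · have hm : 2 * x0 - p ∈ Set.Icc p q := ⟨by linarith [hx0.1], by linarith⟩
      have e := h0 _ hm
      rw [show (2 * x0 - p + p) / 2 = x0 by ring] at e
      have : _ ≤ |δ x0| := hmax hm
      have e2 : |δ x0| = |δ (2 * x0 - p)| / 2 := by rw [e, abs_div, abs_two]
      linarith
    · have hm : 2 * x0 - q ∈ Set.Icc p q := ⟨by linarith, by linarith [hx0.2]⟩
      have e := h1 _ hm
      rw [show (2 * x0 - q + q) / 2 = x0 by ring] at e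
      have : _ ≤ |δ x0| := hmax hm
      have e2 : |δ x0| = |δ (2 * x0 - q)| / 2 := by rw [e, abs_div, abs_two]
      linarith
  intro x hx
  have : |δ x| ≤ |δ x0| := hmax hx
  have h3 := abs_nonneg (δ x0)
  have h4 : |δ x| ≤ 0 := by linarith
  exact abs_nonpos_iff.1 h4

theorem zpow_of_Dy_inv {l : ℝ} (h0 : 0 < l) (h1 : l ∈ Dy) (h2 : l⁻¹ ∈ Dy) : ∃ k : ℤ, l = 2 ^ k := by
  obtain ⟨a, n, rfl⟩ := h1
  obtain ⟨b, m, hb⟩ := h2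
  have hp : (0 : ℝ) < 2 ^ n := by positivity
  have ha : (0 : ℝ) < a := (div_pos_iff_of_pos_right hp).1 h0
  have ha' : 0 < a := by exact_mod_cast ha
  rw [inv_div, div_eq_div_iff ha.ne' (by positivity), ← pow_add] at hb
  have hb' : (2 : ℤ) ^ (n + m) = b * a := by exact_mod_cast hb
  obtain ⟨c, rfl⟩ : ∃ c : ℕ, a = c := ⟨a.toNat, by omega⟩
  have hdvd : c ∣ 2 ^ (n + m) := by
    have : (c : ℤ) ∣ 2 ^ (n + m) := ⟨b, by rw [hb', mul_comm]⟩
    exact_mod_cast this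
  obtain ⟨i, -, rfl⟩ := (Nat.dvd_prime_pow Nat.prime_two).1 hdvd
  exact ⟨i - n, by rw [zpow_sub₀ two_ne_zero]; simp⟩

theorem half_mem_Dy {x : ℝ} (hx : x ∈ Dy) : x / 2 ∈ Dy := by
  have := zpow_mul_mem_Dy (k := -1).2 hx
  rwa [zpow_neg_one, inv_mul_eq_div] at this

/-- `Φ` is affine with slope a power of two on some interval. -/
theorem exists_affine_interval (h : Nrm Φ) : ∃ (p q : ℝ) (k : ℤ) (c : ℝ), p < q ∧
    ∀ x, p ≤ x → x ≤ q → Φ x = 2 ^ k * x + c := by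
  obtain ⟨L0, hL0, haff⟩ := h.exists_affine
  set e : ℝ := 1 / 2 ^ L0 with he
  have he0 : 0 < e := by positivity
  have he1 : e < 1 := by
    rw [he, div_lt_one (by positivity)]
    exact one_lt_pow₀ (by norm_num) (by omega)
  have heD : e ∈ Dy := ⟨1, L0, by simp [he]⟩
  set p := Φ.symm 0 with hp
  set q := Φ.symm e with hq
  have hpD : p ∈ Dy := h.symm_Dy Dy.zero_mem
  have hqD : q ∈ Dy := h.symm_Dy heD
  have hΦp : Φ p = 0 := Φ.apply_symm_apply 0
  have hΦq : Φ q = e := Φ.apply_symm_apply e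
  have hpq : p < q := Φ.symm.strictMono he0
  have hq1 : q < p + 1 := by
    rw [← Φ.lt_iff_lt, h.h1, hΦp, hΦq]; linarith
  -- conjugates of the two contractions of `[p, q]` by one half are affine
  have main : ∀ r ∈ Dy, p ≤ r → r ≤ q → ∃ F ∈ PT, (∀ x, p ≤ x → x ≤ q → F x = (x + r) / 2) ∧
      ∃ (k : ℤ) (c : ℝ), ∀ x, 0 ≤ x → x ≤ e → (Φ * F * Φ⁻¹) x = 2 ^ k * x + c := by
    intro r hr hpr hrq
    obtain ⟨F, hF, hFx⟩ := exists_ext_aff (k := -1) (half_mem_Dy hr) hpD hqD hpq hq1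
      (by rw [zpow_neg_one]; linarith)
    have hFx' : ∀ x, p ≤ x → x ≤ q → F x = (x + r) / 2 := fun x h1 h2 => by
      rw [hFx x h1 h2, zpow_neg_one]; ring
    refine ⟨F, hF, hFx', haff _ (h.conj_mem hF) (fun x x0 x1 => ?_) fun y y0 y1 => ?_⟩
    · obtain ⟨z, rfl⟩ := Φ.surjective x
      have z0 : p ≤ z := by rw [← Φ.le_iff_le, hΦp]; exact x0
      have z1 : z ≤ q := by rw [← Φ.le_iff_le, hΦq]; exact x1
      rw [conj_apply, hFx' z z0 z1, ← hΦp, ← hΦq, Φ.le_iff_le, Φ.le_iff_le]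
      constructor <;> linarith
    · have e1 : Φ⁻¹ * (Φ * F * Φ⁻¹) * Φ = F := by group
      rw [e1]
      exact NB.of_eq (Φ.symm.strictMono y0) (Φ.symm.strictMono y1) hFx
  obtain ⟨F, hF, hFx, k, c, hk⟩ := main p hpD le_rfl hpq.le
  obtain ⟨G, hG, hGx, l, d, hl⟩ := main q hqD hpq.le le_rfl
  have hFp : F p = p := by rw [hFx p le_rfl hpq.le]; ring
  have hGq : G q = q := by rw [hGx q hpq.le le_rfl]; ring
  -- their slopes are computed at their fixed points
  obtain rfl : k = -1 := by
    have r1 := h.RG_conj hF hpD hFp (k := -1) (RG.of_eq (c := p / 2) hpq fun y h1 h2 => by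
      rw [hFx y h1 h2, zpow_neg_one]; ring)
    rw [hΦp] at r1
    exact (RG.of_eq he0 hk).unique r1
  obtain rfl : l = -1 := by
    have r1 := h.LG_conj hG hqD hGq (k := -1) (LG.of_eq (c := q / 2) hpq fun y h1 h2 => by
      rw [hGx y h1 h2, zpow_neg_one]; ring)
    rw [hΦq] at r1
    exact (LG.of_eq he0 hl).unique r1
  have hbd : ∀ x, p ≤ x → x ≤ q → 0 ≤ Φ x ∧ Φ x ≤ e := fun x h1 h2 => by
    rw [← hΦp, ← hΦq]; exact ⟨Φ.monotone h1, Φ.monotone h2⟩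
  have f0 : ∀ x, p ≤ x → x ≤ q → Φ ((x + p) / 2) = Φ x / 2 := by
    intro x h1 h2
    have e1 := hk (Φ x) (hbd x h1 h2).1 (hbd x h1 h2).2
    have e2 := hk (Φ p) (hbd p le_rfl hpq.le).1 (hbd p le_rfl hpq.le).2
    rw [conj_apply, hFp, hΦp] at e2
    rw [conj_apply, hFx x h1 h2, zpow_neg_one] at e1
    rw [e1]; linarith
  have f1 : ∀ x, p ≤ x → x ≤ q → Φ ((x + q) / 2) = (Φ x + e) / 2 := by
    intro x h1 h2
    have e1 := hl (Φ x) (hbd x h1 h2).1 (hbd x h1 h2).2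
    have e2 := hl (Φ q) (hbd q hpq.le le_rfl).1 (hbd q hpq.le le_rfl).2
    rw [conj_apply, hGq, hΦq, zpow_neg_one] at e2
    rw [conj_apply, hGx x h1 h2, zpow_neg_one] at e1
    rw [e1]; linarith
  have hqp : 0 < q - p := by linarith
  set t := e / (q - p) with ht
  have ht0 : 0 < t := by positivity
  have hte : t * (q - p) = e := by rw [ht]; field_simp
  have hzero := eq_zero_of_halving (δ := fun x => Φ x - t * (x - p)) hpq
    ((Φ.continuous.sub (by fun_prop)).continuousOn)
    (fun x hx => by simp only [f0 x hx.1 hx.2]; ring)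
    (fun x hx => by simp only [f1 x hx.1 hx.2]; rw [← hte]; ring)
  have hlin : ∀ x, p ≤ x → x ≤ q → Φ x = t * (x - p) := fun x h1 h2 => by
    have : Φ x - t * (x - p) = 0 := hzero x ⟨h1, h2⟩
    linarith
  -- the slope `t` and its inverse are dyadic, so `t` is a power of two
  obtain ⟨n, hn⟩ := exists_pow_lt_of_lt_one (lt_min hqp he0) (by norm_num : (1 / 2 : ℝ) < 1)
  have hn0 : (0 : ℝ) < 2 ^ (-n : ℤ) := by positivity
  have hn' : (2 : ℝ) ^ (-n : ℤ) < min (q - p) e := by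
    rw [zpow_neg, zpow_natCast]; simpa using hn
  obtain ⟨n1, n2⟩ := lt_min_iff.1 hn'
  have htD : t ∈ Dy := by
    have e1 := hlin (p + 2 ^ (-n : ℤ)) (by linarith) (by linarith)
    have e2 := h.map_Dy (Dy.add_mem hpD (zpow_mem_Dy (-n)))
    rw [e1, add_sub_cancel_left, mul_comm, zpow_mul_mem_Dy] at e2
    exact e2
  have htD' : t⁻¹ ∈ Dy := by
    have e0 : 2 ^ (-n : ℤ) * t⁻¹ ≤ q - p := by
      rw [← div_eq_mul_inv, div_le_iff₀ ht0]; linarith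
    have e1 := hlin (p + 2 ^ (-n : ℤ) * t⁻¹) (by have := inv_pos.2 ht0; nlinarith) (by linarith)
    rw [add_sub_cancel_left, mul_comm t, mul_assoc, inv_mul_cancel₀ ht0.ne', mul_one] at e1
    have e2 := Dy.sub_mem (h.Dy_iff.1 (e1 ▸ zpow_mem_Dy (-n))) hpD
    rwa [add_sub_cancel_left, zpow_mul_mem_Dy] at e2
  obtain ⟨k, hk'⟩ := zpow_of_Dy_inv ht0 htD htD'
  exact ⟨p, q, k, -(t * p), hpq, fun x h1 h2 => by rw [hlin x h1 h2, ← hk']; ring⟩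

/-- The normalizer of `PT` among increasing homeomorphisms commuting with `x ↦ x + 1` is `PT`. -/
theorem mem_PT (h : Nrm Φ) : Φ ∈ PT := by
  obtain ⟨p, q, k, c, hpq, haff⟩ := h.exists_affine_interval
  refine ⟨⟨fun x => ?_, fun x hx => h.map_Dy hx⟩, h.h1⟩
  -- a translation carries any point into the interval where `Φ` is affine
  obtain ⟨d, hd, d1, d2⟩ := exists_Dy_btwn (show p - x < q - x by linarith)
  have hF := aff_mem_PT hd
  obtain ⟨a, b, g1, g2, g3⟩ := (h.conj_mem (PT.inv_mem hF)).1.1 (Φ (x + d))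
  have hx1 : p < aff 0 d x := by simp; linarith
  have hx2 : aff 0 d x < q := by simp; linarith
  have hT : aff 0 d x = x + d := by simp
  have r1 : RG Φ (aff 0 d x) k := RG.of_eq hx2 fun y h1 h2 => haff y (hx1.le.trans h1) h2
  have r2 : LG Φ (aff 0 d x) k := LG.of_eq hx1 fun y h1 h2 => haff y h1 (h2.trans hx2.le)
  rw [← hT] at g1 g2 g3
  have r3 := (g1.comp r1).comp (RG_affine 0 d x : RG (aff 0 d) x 0)
  have r4 := (g2.comp r2).comp (LG_affine 0 d x : LG (aff 0 d) x 0)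
  have e : (fun t => (Φ * (aff 0 d)⁻¹ * Φ⁻¹) (Φ (aff 0 d t))) = Φ := by
    funext t
    rw [conj_apply]
    change Φ ((aff 0 d).symm (aff 0 d t)) = _
    rw [OrderIso.symm_apply_apply]
  rw [e] at r3 r4
  refine ⟨_, _, r3, r4, fun hne => ?_⟩
  have := h.Dy_iff.1 (g3 fun hc => hne (by rw [hc]))
  rw [hT] at this
  simpa using Dy.sub_mem this hd

end Nrm

/-! ### A form of Rubin's theorem -/

namespace Rubin

open Topology
open scoped commutatorElement

set_option linter.unusedSectionVars false

variable {X G : Type*} [TopologicalSpace X] [Group G] [MulAction G X]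

/-- The open support of a group element. -/
def sp (X : Type*) [MulAction G X] (f : G) : Set X := {x | f • x ≠ x}

/-- An action with many elements of small support: every point can be moved by an element
supported in a given neighbourhood, even by its twelfth power, and has arbitrarily small
neighbourhoods `W` in which its orbit under the elements supported in `W` is dense. -/
structure Rich (X G : Type*) [TopologicalSpace X] [Group G] [MulAction G X] : Prop where
  move : ∀ (V : Set X) (x : X), IsOpen V → x ∈ V → ∃ f : G, sp X f ⊆ V ∧ f ^ 12 • x ≠ x
  dense : ∀ (U : Set X) (q : X), IsOpen U → q ∈ U → ∃ W ⊆ U, IsOpen W ∧ q ∈ W ∧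
    ∀ O ⊆ W, IsOpen O → O.Nonempty → ∃ g : G, sp X g ⊆ W ∧ g • q ∈ O

theorem mem_sp {f : G} {x : X} : x ∈ sp X f ↔ f • x ≠ x := Iff.rfl

theorem smul_eq_of_not_mem {f : G} {x : X} (h : x ∉ sp X f) : f • x = x := not_not.1 h

theorem smul_mem_sp {f : G} {x : X} : f • x ∈ sp X f ↔ x ∈ sp X f := by
  simp [mem_sp]

theorem sp_inv (f : G) : sp X f⁻¹ = sp X f := by
  ext x; simp only [mem_sp, ne_eq, inv_smul_eq_iff]; exact not_congr eq_comm

theorem sp_mul (f g : G) : sp X (f * g) ⊆ sp X f ∪ sp X g := by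
  intro x hx
  by_contra h
  rw [Set.mem_union, not_or] at h
  apply hx
  rw [mul_smul, smul_eq_of_not_mem h.2, smul_eq_of_not_mem h.1]

theorem sp_pow (f : G) (n : ℕ) : sp X (f ^ n) ⊆ sp X f := by
  induction n with
  | zero => intro x hx; simp [mem_sp] at hx
  | succ n ih => rw [pow_succ]; exact (sp_mul _ _).trans (Set.union_subset ih le_rfl)

theorem mem_sp_conj {f g : G} {x : X} : x ∈ sp X (g * f * g⁻¹) ↔ g⁻¹ • x ∈ sp X f := by
  simp only [mem_sp, mul_smul, ne_eq]
  rw [← eq_inv_smul_iff]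

theorem mem_sp_commute {f g : G} (h : Commute f g) {x : X} : f • x ∈ sp X g ↔ x ∈ sp X g := by
  have := mem_sp_conj (f := g) (g := f) (x := f • x)
  rw [h.eq, mul_inv_cancel_right, inv_smul_smul] at this
  exact this

variable [FaithfulSMul G X]

theorem exists_mem_sp {f : G} (h : f ≠ 1) : (sp X f).Nonempty := by
  by_contra hc
  rw [Set.not_nonempty_iff_eq_empty] at hc
  apply h
  apply FaithfulSMul.eq_of_smul_eq_smul (α := X)
  intro x
  rw [one_smul]
  exact smul_eq_of_not_mem (by rw [hc]; exact Set.notMem_empty x)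

theorem commute_of_disjoint {f g : G} (h : Disjoint (sp X f) (sp X g)) : Commute f g := by
  apply FaithfulSMul.eq_of_smul_eq_smul (α := X)
  intro x
  rw [Set.disjoint_left] at h
  rw [mul_smul, mul_smul]
  by_cases hf : x ∈ sp X f
  · rw [smul_eq_of_not_mem (h hf), smul_eq_of_not_mem (h (smul_mem_sp.2 hf))]
  · by_cases hg : x ∈ sp X g
    · have h2 : g • x ∉ sp X f := fun hc => h hc (smul_mem_sp.2 hg)
      rw [smul_eq_of_not_mem h2, smul_eq_of_not_mem hf]
    · rw [smul_eq_of_not_mem hg, smul_eq_of_not_mem hf, smul_eq_of_not_mem hg]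

variable [T2Space X] [ContinuousConstSMul G X]

theorem isOpen_sp (f : G) : IsOpen (sp X f) :=
  isOpen_ne_fun (continuous_const_smul f) continuous_id

/-- A point moved by `f` has a small neighbourhood displaced from itself by `f`. -/
theorem exists_displaced {f : G} {x : X} (h : x ∈ sp X f) {U : Set X} (hU : IsOpen U) (hx : x ∈ U) :
    ∃ V ⊆ U, IsOpen V ∧ x ∈ V ∧ ∀ y ∈ V, f • y ∉ V := by
  obtain ⟨A, B, hA, hB, hxA, hxB, hAB⟩ := t2_separation h
  refine ⟨U ∩ B ∩ (fun y => f • y) ⁻¹' A, fun y hy => hy.1.1,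
    (hU.inter hB).inter (hA.preimage (continuous_const_smul f)), ⟨⟨hx, hxB⟩, hxA⟩,
    fun y hy hc => Set.disjoint_left.1 hAB hy.2 hc.1.2⟩

theorem Rich.move_one (hR : Rich X G) {V : Set X} {x : X} (hV : IsOpen V) (hx : x ∈ V) :
    ∃ f : G, sp X f ⊆ V ∧ x ∈ sp X f := by
  obtain ⟨f, h1, h2⟩ := hR.move V x hV hx
  exact ⟨f, h1, sp_pow f 12 h2⟩

theorem Rich.exists_noncomm (hR : Rich X G) {V : Set X} {x : X} (hV : IsOpen V) (hx : x ∈ V) :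
    ∃ f g : G, sp X f ⊆ V ∧ sp X g ⊆ V ∧ ¬ Commute f g := by
  obtain ⟨f, f1, f2⟩ := hR.move_one hV hx
  obtain ⟨V', h1, h2, h3, h4⟩ := exists_displaced f2 hV hx
  obtain ⟨g, g1, g2⟩ := hR.move_one h2 h3
  exact ⟨f, g, f1, g1.trans h1, fun hc => h4 x h3 (g1 ((mem_sp_commute hc).2 g2))⟩

/-- An algebraic condition sandwiched between disjointness of the supports of `f` and `g` and
disjointness of the supports of `f` and `g ^ 12`. -/
def AD (f g : G) : Prop := ∀ h : G, ¬ Commute f h → ∃ f1 f2 : G, Commute f1 g ∧ Commute f2 g ∧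
  Commute ⁅f1, ⁅f2, h⁆⁆ g ∧ ⁅f1, ⁅f2, h⁆⁆ ≠ 1

theorem AD_of_disjoint (hR : Rich X G) {f g : G} (h : Disjoint (sp X f) (sp X g)) : AD f g := by
  intro h' hne
  obtain ⟨x, hxf, hxh⟩ : ∃ x ∈ sp X f, x ∈ sp X h' := by
    by_contra hc
    push Not at hc
    exact hne (commute_of_disjoint (X := X) (Set.disjoint_left.2 hc))
  obtain ⟨V, v1, v2, v3, v4⟩ := exists_displaced hxh (isOpen_sp f) hxf
  obtain ⟨f1, f2, h1, h2, h3⟩ := hR.exists_noncomm v2 v3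
  have hdg : ∀ {b : G}, sp X b ⊆ V → Commute b g := fun {b} hb =>
    commute_of_disjoint (h.mono_left (hb.trans v1))
  have hu : ∀ {b : G}, sp X b ⊆ V → Commute b (h' * f2⁻¹ * h'⁻¹) := by
    intro b hb
    apply commute_of_disjoint (X := X)
    rw [Set.disjoint_left]
    intro y hy hy2
    rw [mem_sp_conj, sp_inv] at hy2
    have := v4 _ (h2 hy2)
    rw [smul_inv_smul] at this
    exact this (hb hy)
  have e : ⁅f1, ⁅f2, h'⁆⁆ = ⁅f1, f2⁆ := by
    have e1 : ⁅f2, h'⁆ = f2 * (h' * f2⁻¹ * h'⁻¹) := by rw [commutatorElement_def]; group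
    rw [e1]
    set u := h' * f2⁻¹ * h'⁻¹ with hu'
    have e2 : u * f1⁻¹ = f1⁻¹ * u := ((hu h1).inv_left).symm.eq
    rw [commutatorElement_def, commutatorElement_def, mul_inv_rev]
    calc f1 * (f2 * u) * f1⁻¹ * (u⁻¹ * f2⁻¹) = f1 * f2 * (u * f1⁻¹) * u⁻¹ * f2⁻¹ := by group
      _ = f1 * f2 * f1⁻¹ * f2⁻¹ := by rw [e2]; group
  refine ⟨f1, f2, hdg h1, hdg h2, ?_, ?_⟩
  · rw [e, commutatorElement_def]
    exact (((hdg h1).mul_left (hdg h2)).mul_left (hdg h1).inv_left).mul_left (hdg h2).inv_left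
  · rw [e, Ne, commutatorElement_eq_one_iff_commute]; exact h3

/-- If `x` were moved by both `f` and `g ^ 12`, a small neighbourhood `V` of `x` would be displaced
from itself by `f`, `g`, ..., `g ^ 4`. For `k` supported in `V`, the support of the double
commutator `⁅f1, ⁅f2, k⁆⁆` is covered by four translates of `V` under elements commuting with `g`,
yet it contains five points `g ^ i • z`, two of which must share a translate. -/
theorem disjoint_of_AD (hR : Rich X G) {f g : G} (h : AD f g) :
    Disjoint (sp X f) (sp X (g ^ 12)) := by
  rw [Set.disjoint_left]
  intro x hxf hxg
  have hmoved : ∀ n, n ∣ 12 → x ∈ sp X (g ^ n) := by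
    rintro n ⟨d, hd⟩
    rw [hd, pow_mul] at hxg
    exact sp_pow _ _ hxg
  obtain ⟨V0, -, o0, x0, d0⟩ := exists_displaced hxf isOpen_univ (Set.mem_univ x)
  obtain ⟨V1, s1, o1, x1, d1⟩ := exists_displaced (hmoved 1 (by norm_num)) o0 x0
  obtain ⟨V2, s2, o2, x2, d2⟩ := exists_displaced (hmoved 2 (by norm_num)) o1 x1
  obtain ⟨V3, s3, o3, x3, d3⟩ := exists_displaced (hmoved 3 (by norm_num)) o2 x2
  obtain ⟨V, s4, oV, xV, d4⟩ := exists_displaced (hmoved 4 (by norm_num)) o3 x3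
  have hd : ∀ n, 1 ≤ n → n ≤ 4 → ∀ y ∈ V, g ^ n • y ∉ V := by
    intro n h1 h4 y hy hc
    interval_cases n
    · exact d1 y (s2 (s3 (s4 hy))) (s2 (s3 (s4 hc)))
    · exact d2 y (s3 (s4 hy)) (s3 (s4 hc))
    · exact d3 y (s4 hy) (s4 hc)
    · exact d4 y hy hc
  obtain ⟨k, k1, k2⟩ := hR.move_one oV xV
  have hVf : ∀ y ∈ V, f • y ∉ V := fun y hy hc =>
    d0 y (s1 (s2 (s3 (s4 hy)))) (s1 (s2 (s3 (s4 hc))))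
  have hfk : ¬ Commute f k := fun hc => hVf x xV (k1 ((mem_sp_commute hc).2 k2))
  obtain ⟨f1, f2, c1, c2, c3, hne⟩ := h k hfk
  obtain ⟨z, hz⟩ := exists_mem_sp (X := X) hne
  -- the support of the double commutator is covered by four translates of `V`
  have hw : ∀ y ∈ sp X ⁅f2, k⁆, f2⁻¹ • y ∈ V ∨ y ∈ V := by
    intro y hy
    rw [commutatorElement_def] at hy
    rcases sp_mul _ _ hy with hy | hy
    · rw [mem_sp_conj] at hy; exact Or.inl (k1 hy)
    · rw [sp_inv] at hy; exact Or.inr (k1 hy)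
  have hcov : ∀ y ∈ sp X ⁅f1, ⁅f2, k⁆⁆, ∃ e : Fin 4,
      (![f1 * f2, f1, f2, 1] e)⁻¹ • y ∈ V := by
    intro y hy
    rw [commutatorElement_def] at hy
    rcases sp_mul _ _ hy with hy | hy
    · rw [mem_sp_conj] at hy
      rcases hw _ hy with h5 | h5
      · exact ⟨0, by simpa [mul_smul] using h5⟩
      · exact ⟨1, by simpa using h5⟩
    · rw [sp_inv] at hy
      rcases hw _ hy with h5 | h5
      · exact ⟨2, by simpa using h5⟩
      · exact ⟨3, by simpa using h5⟩
  have hcomm : ∀ e : Fin 4, Commute (![f1 * f2, f1, f2, 1] e) g := by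
    intro e
    fin_cases e
    · exact c1.mul_left c2
    · exact c1
    · exact c2
    · exact Commute.one_left g
  have horb : ∀ i : Fin 5, ∃ e : Fin 4, (![f1 * f2, f1, f2, 1] e)⁻¹ • (g ^ (i : ℕ) • z) ∈ V :=
    fun i => hcov _ ((mem_sp_commute (c3.symm.pow_left _)).2 hz)
  choose c hc using horb
  obtain ⟨i, j, hij, hcij⟩ := Fintype.exists_ne_map_eq_of_card_lt c (by simp)
  -- two of the five points lie in the same translate
  have fin : ∀ i j : Fin 5, i < j → c i = c j → False := by
    intro i j hij hcij
    have h1 := hc i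
    have h2 := hc j
    rw [← hcij] at h2
    set u := ![f1 * f2, f1, f2, 1] (c i)
    have hu : Commute u⁻¹ g := (hcomm (c i)).inv_left
    obtain ⟨d, hd'⟩ := Nat.exists_eq_add_of_le (show (i : ℕ) ≤ j from le_of_lt hij)
    have e : u⁻¹ • (g ^ (j : ℕ) • z) = g ^ d • (u⁻¹ • (g ^ (i : ℕ) • z)) := by
      rw [← mul_smul, ← mul_smul, ← mul_smul, hd', add_comm, pow_add, ← mul_assoc,
        (hu.pow_right d).eq, mul_assoc]
    rw [e] at h2
    exact hd d (by have : (i : ℕ) < j := hij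
                   omega) (by omega) _ h1 h2
  rcases lt_or_gt_of_ne hij with h5 | h5
  · exact fin i j h5 hcij
  · exact fin j i h5 hcij.symm

/-- An algebraically defined set of elements, lying between those supported in the support of `f`
and those supported in its closure. -/
def Bset (f : G) : Set G := {b | ∀ g, AD f g → Commute b (g ^ 12)}

theorem mem_Bset_of_subset (hR : Rich X G) {f b : G} (h : sp X b ⊆ sp X f) : b ∈ Bset f :=
  fun _ hg => commute_of_disjoint ((disjoint_of_AD hR hg).mono_left h)

theorem subset_of_mem_Bset (hR : Rich X G) {f b : G} (h : b ∈ Bset f) :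
    sp X b ⊆ closure (sp X f) := by
  intro x hx
  by_contra hcl
  obtain ⟨V, v1, v2, v3, v4⟩ := exists_displaced hx isClosed_closure.isOpen_compl hcl
  obtain ⟨g, g1, g2⟩ := hR.move V x v2 v3
  have hAD : AD f g := AD_of_disjoint hR (by
    rw [Set.disjoint_left]
    intro y hy hyg
    exact v1 (g1 hyg) (subset_closure hy))
  have hx2 : x ∈ sp X (g ^ 12) := g2
  exact v4 x v3 (g1 (sp_pow g 12 ((mem_sp_commute (h g hAD)).2 hx2)))

/-- Disjointness of supports is expressed in terms of the group structure alone. -/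
theorem disjoint_iff (hR : Rich X G) {f g : G} : Disjoint (sp X f) (sp X g) ↔
    ∀ b ∈ Bset f, ∀ c ∈ Bset g, Commute b c := by
  constructor
  · intro h b hb c hc
    apply commute_of_disjoint (X := X)
    have h1 : Disjoint (sp X b) (sp X g) :=
      (h.closure_left (isOpen_sp g)).mono_left (subset_of_mem_Bset hR hb)
    exact (h1.closure_right (isOpen_sp b)).mono_right (subset_of_mem_Bset hR hc)
  · intro h
    rw [Set.disjoint_left]
    intro x hf hg
    obtain ⟨b, c, h1, h2, h3⟩ := hR.exists_noncomm ((isOpen_sp f).inter (isOpen_sp g)) ⟨hf, hg⟩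
    exact h3 (h b (mem_Bset_of_subset hR fun y hy => (h1 hy).1) c
      (mem_Bset_of_subset hR fun y hy => (h2 hy).2))

theorem AD_map (α : G ≃* G) {f g : G} (h : AD f g) : AD (α f) (α g) := by
  intro k hk
  obtain ⟨f1, f2, h1, h2, h3, h4⟩ := h (α.symm k) fun hc => hk (by
    have := hc.map α; simpa using this)
  have e : α ⁅f1, ⁅f2, α.symm k⁆⁆ = ⁅α f1, ⁅α f2, k⁆⁆ := by simp [map_commutatorElement]
  refine ⟨α f1, α f2, h1.map α, h2.map α, e ▸ h3.map α, ?_⟩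
  rw [← e]
  exact fun hc => h4 ((EmbeddingLike.map_eq_one_iff (f := α)).1 hc)

theorem Bset_map (α : G ≃* G) {f b : G} (h : b ∈ Bset f) : α b ∈ Bset (α f) := by
  intro g hg
  have h1 := AD_map α.symm hg
  rw [α.symm_apply_apply] at h1
  have := (h _ h1).map α
  simpa using this

theorem disjoint_map (hR : Rich X G) (α : G ≃* G) {f g : G} (h : Disjoint (sp X f) (sp X g)) :
    Disjoint (sp X (α f)) (sp X (α g)) := by
  rw [disjoint_iff hR] at h ⊢
  intro b hb c hc
  have h1 := Bset_map α.symm hb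
  have h2 := Bset_map α.symm hc
  rw [α.symm_apply_apply] at h1 h2
  have := (h _ h1 _ h2).map α
  simpa using this

theorem disjoint_map_iff (hR : Rich X G) (α : G ≃* G) {f g : G} :
    Disjoint (sp X (α f)) (sp X (α g)) ↔ Disjoint (sp X f) (sp X g) :=
  ⟨fun h => by simpa using disjoint_map hR α.symm h, disjoint_map hR α⟩

theorem subset_closure_iff (hR : Rich X G) {f g : G} : sp X f ⊆ closure (sp X g) ↔
    ∀ h : G, Disjoint (sp X h) (sp X g) → Disjoint (sp X h) (sp X f) := by
  constructor
  · intro hs h hd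
    exact (hd.closure_right (isOpen_sp h)).mono_right hs
  · intro H x hx
    by_contra hcl
    obtain ⟨h, h1, h2⟩ := hR.move_one isClosed_closure.isOpen_compl hcl
    exact Set.disjoint_left.1 (H h (Set.disjoint_left.2 fun y hy hyg =>
      h1 hy (subset_closure hyg))) h2 hx

theorem subset_closure_map (hR : Rich X G) (α : G ≃* G) {f g : G}
    (h : sp X f ⊆ closure (sp X g)) : sp X (α f) ⊆ closure (sp X (α g)) := by
  rw [subset_closure_iff hR] at h ⊢
  intro k hk
  have := h (α.symm k) (by
    rw [← disjoint_map_iff hR α]; simpa using hk)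
  rw [← disjoint_map_iff hR α] at this
  simpa using this

/-- The closed set of points corresponding to `p` under the automorphism `α`. -/
def Kset (X : Type*) [TopologicalSpace X] [MulAction G X] (α : G ≃* G) (p : X) : Set X :=
  {q | ∀ f : G, p ∈ sp X f → q ∈ closure (sp X (α f))}

theorem Kset_nonempty [CompactSpace X] (hR : Rich X G) (α : G ≃* G) (p : X) :
    (Kset X α p).Nonempty := by
  have : Nonempty {f : G // p ∈ sp X f} := by
    obtain ⟨f, -, hf⟩ := hR.move_one isOpen_univ (Set.mem_univ p)
    exact ⟨⟨f, hf⟩⟩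
  have := IsCompact.nonempty_iInter_of_directed_nonempty_isCompact_isClosed
    (fun f : {f : G // p ∈ sp X f} => closure (sp X (α f))) ?_ ?_ ?_ ?_
  · obtain ⟨q, hq⟩ := this
    exact ⟨q, fun f hf => Set.mem_iInter.1 hq ⟨f, hf⟩⟩
  · rintro ⟨f, hf⟩ ⟨g, hg⟩
    obtain ⟨h, h1, h2⟩ := hR.move_one ((isOpen_sp f).inter (isOpen_sp g)) ⟨hf, hg⟩
    exact ⟨⟨h, h2⟩,
      closure_minimal (subset_closure_map hR α fun y hy => subset_closure (h1 hy).1)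
        isClosed_closure,
      closure_minimal (subset_closure_map hR α fun y hy => subset_closure (h1 hy).2)
        isClosed_closure⟩
  · rintro ⟨f, hf⟩
    refine (exists_mem_sp (X := X) fun hc => hf ?_).closure
    rw [EmbeddingLike.map_eq_one_iff] at hc
    have hc' : f = 1 := hc
    rw [hc', one_smul]
  · exact fun f => isClosed_closure.isCompact
  · exact fun f => isClosed_closure

theorem Kset_symm [CompactSpace X] (hR : Rich X G) (α : G ≃* G) {p q : X} (h : q ∈ Kset X α p) :
    p ∈ Kset X α.symm q := by
  intro g hg
  by_contra hcl
  obtain ⟨f, f1, f2⟩ := hR.move_one isClosed_closure.isOpen_compl hcl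
  have hd : Disjoint (sp X (α f)) (sp X g) := by
    have : Disjoint (sp X f) (sp X (α.symm g)) := Set.disjoint_left.2 fun y hy hyg =>
      f1 hy (subset_closure hyg)
    rw [← disjoint_map_iff hR α] at this
    simpa using this
  exact Set.disjoint_left.1 (hd.closure_left (isOpen_sp g)) (h f f2) hg

theorem Kset_smul (α : G ≃* G) {p q : X} (h : q ∈ Kset X α p) (f : G) :
    α f • q ∈ Kset X α (f • p) := by
  intro k hk
  have h1 : p ∈ sp X (f⁻¹ * k * f⁻¹⁻¹) := by rw [mem_sp_conj, inv_inv]; exact hk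
  have h2 := h _ h1
  have e : sp X (α (f⁻¹ * k * f⁻¹⁻¹)) = (fun y => α f • y) ⁻¹' sp X (α k) := by
    ext y
    rw [map_mul, map_mul, map_inv α f⁻¹, map_inv α f, mem_sp_conj, inv_inv]; rfl
  rw [e] at h2
  exact (continuous_const_smul (α f)).closure_preimage_subset _ h2

/-- If `q` and `q'` both correspond to `p`, then every element supported in a small open set `W`
around `q` is carried by `α⁻¹` to an element fixing `p`. By density of orbits in `W`, all of `W`
corresponds to `p`, and so do the points of two disjoint supports, which is absurd. -/
theorem Kset_unique [CompactSpace X] (hR : Rich X G) (α : G ≃* G) {p q q' : X}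
    (h : q ∈ Kset X α p) (h' : q' ∈ Kset X α p) : q = q' := by
  by_contra hne
  obtain ⟨U, U', hU, hU', hqU, hqU', hd⟩ := t2_separation hne
  have hq'U : q' ∉ closure U := Set.disjoint_right.1 (hd.closure_left hU') hqU'
  obtain ⟨W, hWU, hW, hqW, hdense⟩ := hR.dense U q hU hqU
  -- elements supported in `W` fix `p` after transport by `α⁻¹`
  have hfix : ∀ g : G, sp X g ⊆ W → α.symm g • p = p := by
    intro g hg
    by_contra hc
    have := h' (α.symm g) hc
    rw [α.apply_symm_apply] at this
    exact hq'U (closure_mono (hg.trans hWU) this)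
  have hcl : IsClosed (Kset X α p) := by
    have : Kset X α p = ⋂ (f : G) (_ : p ∈ sp X f), closure (sp X (α f)) := by
      ext q; simp [Kset]
    rw [this]
    exact isClosed_iInter fun f => isClosed_iInter fun _ => isClosed_closure
  have hWK : W ⊆ Kset X α p := by
    intro w hw
    by_contra hc
    obtain ⟨g, g1, g2⟩ := hdense (W ∩ (Kset X α p)ᶜ) Set.inter_subset_left
      (hW.inter hcl.isOpen_compl) ⟨w, hw, hc⟩
    have := Kset_smul α h (α.symm g)
    rw [α.apply_symm_apply, hfix g g1] at this
    exact g2.2 this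
  obtain ⟨V, hV, hqV, hVW⟩ : ∃ V, IsOpen V ∧ q ∈ V ∧ closure V ⊆ W := by
    obtain ⟨C, hC, hCcl, hCW⟩ := exists_mem_nhds_isClosed_subset (hW.mem_nhds hqW)
    exact ⟨interior C, isOpen_interior, mem_interior_iff_mem_nhds.2 hC,
      (closure_minimal interior_subset hCcl).trans hCW⟩
  obtain ⟨g, g1, g2⟩ := hR.move_one hV hqV
  have he : α.symm g ≠ 1 := fun hc => by
    rw [EmbeddingLike.map_eq_one_iff] at hc
    rw [hc] at g2
    exact g2 (one_smul _ _)
  obtain ⟨x, hx⟩ := exists_mem_sp (X := X) he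
  have hpx : p ≠ x := fun hc => hx (by rw [← hc]; exact hfix g (g1.trans (subset_closure.trans hVW)))
  obtain ⟨A, B, hA, hB, hpA, hxB, hAB⟩ := t2_separation hpx
  obtain ⟨e, e1, e2⟩ := hR.move_one ((isOpen_sp (α.symm g)).inter hB) ⟨hx, hxB⟩
  obtain ⟨f, f1, f2⟩ := hR.move_one hA hpA
  have hdis : Disjoint (sp X (α f)) (sp X (α e)) :=
    disjoint_map hR α (hAB.mono f1 fun y hy => (e1 hy).2)
  have hsub : sp X (α e) ⊆ W := by
    have := subset_closure_map hR α (f := e) (g := α.symm g) fun y hy => subset_closure (e1 hy).1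
    rw [α.apply_symm_apply] at this
    exact this.trans ((closure_mono g1).trans hVW)
  have hne1 : α e ≠ 1 := fun hc => by
    rw [EmbeddingLike.map_eq_one_iff] at hc
    rw [hc] at e2
    exact e2 (one_smul _ _)
  obtain ⟨y, hy⟩ := exists_mem_sp (X := X) hne1
  exact Set.disjoint_left.1 (hdis.closure_left (isOpen_sp _)) (hWK (hsub hy) f f2) hy

/-- A form of Rubin's theorem: every automorphism of a rich group of homeomorphisms of a compact
Hausdorff space is induced by a homeomorphism. -/
theorem exists_homeo [CompactSpace X] (hR : Rich X G) (α : G ≃* G) :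
    ∃ φ : X ≃ₜ X, ∀ (f : G) (x : X), φ (f • x) = α f • φ x := by
  choose φ hφ using Kset_nonempty hR α
  choose ψ hψ using Kset_nonempty hR α.symm
  have h1 : ∀ p, ψ (φ p) = p := fun p => Kset_unique hR α.symm (hψ _) (Kset_symm hR α (hφ p))
  have h2 : ∀ q, φ (ψ q) = q := fun q => Kset_unique hR α (hφ _) (Kset_symm hR α.symm (hψ q))
  have h3 : ∀ (f : G) (x : X), φ (f • x) = α f • φ x := fun f x =>
    Kset_unique hR α (hφ _) (Kset_smul α (hφ x) f)
  have h4 : ∀ (f : G) (x : X), ψ (f • x) = α.symm f • ψ x := fun f x =>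
    Kset_unique hR α.symm (hψ _) (Kset_smul α.symm (hψ x) f)
  -- supports form a basis of the topology
  have hcont : ∀ (β : G ≃* G) (χ : X → X), Function.Injective χ →
      (∀ (f : G) (x : X), χ (f • x) = β f • χ x) → Continuous χ := by
    intro β χ hinj hχ
    rw [continuous_iff_continuousAt]
    intro x
    rw [ContinuousAt, tendsto_nhds]
    intro U hU hx
    obtain ⟨g, g1, g2⟩ := hR.move_one hU hx
    have hpre : ∀ y, χ y ∈ sp X g ↔ y ∈ sp X (β.symm g) := by
      intro y
      rw [mem_sp, mem_sp, ← hinj.ne_iff (x := β.symm g • y), hχ, β.apply_symm_apply]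
    exact Filter.mem_of_superset ((isOpen_sp (β.symm g)).mem_nhds ((hpre x).1 g2))
      fun y hy => g1 ((hpre y).2 hy)
  exact ⟨{ toFun := φ, invFun := ψ, left_inv := h1, right_inv := h2
           continuous_toFun := hcont α φ (Function.LeftInverse.injective h1) h3
           continuous_invFun := hcont α.symm ψ (Function.LeftInverse.injective h2) h4 }, h3⟩

end Rubin

/-! ### Lifting the circle to the line -/

namespace Circ

theorem coe_eq_iff {x y : ℝ} : (x : AddCircle (1 : ℝ)) = y ↔ ∃ n : ℤ, y = x + n := by
  rw [eq_comm, ← sub_eq_zero, ← AddCircle.coe_sub, AddCircle.coe_eq_zero_iff]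
  simp only [zsmul_eq_mul, mul_one]
  exact ⟨fun ⟨n, h⟩ => ⟨n, by linarith⟩, fun ⟨n, h⟩ => ⟨n, by linarith⟩⟩

theorem exists_coe (z : AddCircle (1 : ℝ)) : ∃ x : ℝ, (x : AddCircle (1 : ℝ)) = z :=
  QuotientAddGroup.mk_surjective z

/-- `F` is a lift of `f` to the line. -/
def Lifts (F : ℝ ≃o ℝ) (f : AddCircle (1 : ℝ) → AddCircle (1 : ℝ)) : Prop :=
  ∀ x : ℝ, f x = (F x : ℝ)

/-- A set with finitely many points in each period has no other points near a given one. -/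
theorem exists_isolated {B : Set ℝ} (hfin : (B ∩ Set.Ico (0 : ℝ) 1).Finite)
    (hper : ∀ x ∈ B, x + 1 ∈ B ∧ x - 1 ∈ B) (x : ℝ) :
    ∃ ε > 0, ∀ y, |y - x| < ε → y ≠ x → y ∉ B := by
  have hperZ : ∀ n : ℤ, ∀ y ∈ B, y + n ∈ B := by
    intro n
    induction n using Int.induction_on with
    | zero => intro y hy; simpa using hy
    | succ n ih =>
      intro y hy; have := (hper _ (ih y hy)).1; push_cast at this ⊢; rwa [← add_assoc]
    | pred n ih =>
      intro y hy; have := (hper _ (ih y hy)).2; push_cast at this ⊢; rwa [← add_sub_assoc]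
  let T : Set ℝ := ⋃ n ∈ Set.Icc (⌊x⌋ - 1) (⌊x⌋ + 1), (fun y : ℝ => y + n) '' (B ∩ Set.Ico (0 : ℝ) 1)
  have hT : T.Finite := (Set.finite_Icc _ _).biUnion fun n _ => hfin.image _
  have hN : (T \ {x})ᶜ ∈ nhds x :=
    (hT.sdiff).isClosed.isOpen_compl.mem_nhds fun h => h.2 rfl
  obtain ⟨ε, he, H⟩ := Metric.mem_nhds_iff.1 hN
  refine ⟨min ε 1, lt_min he one_pos, fun y hy hyx hyB => ?_⟩
  have h1 : y ∈ Metric.ball x ε := by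
    rw [Metric.mem_ball, Real.dist_eq]; exact hy.trans_le (min_le_left _ _)
  apply H h1
  refine ⟨Set.mem_iUnion₂.2 ⟨⌊y⌋, ?_, Int.fract y, ⟨?_, Int.fract_nonneg y, Int.fract_lt_one y⟩,
    Int.fract_add_floor y⟩, hyx⟩
  · have h2 := abs_lt.1 (hy.trans_le (min_le_right _ _))
    constructor
    · rw [Int.le_floor]; push_cast; linarith [Int.floor_le x]
    · rw [← Int.lt_add_one_iff, Int.floor_lt]; push_cast; linarith [Int.lt_floor_add_one x]
  · have := hperZ (-⌊y⌋) y hyB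
    push_cast at this
    rwa [← sub_eq_add_neg] at this

/-- An element of `T` lifts to an element of `PT`. -/
theorem exists_lift {f : AddCircle (1 : ℝ) → AddCircle (1 : ℝ)} (h : MemT 2 1 f) :
    ∃ F ∈ PT, Lifts F f := by
  obtain ⟨F₀, h1, h2, h3, h4, ⟨B, b1, b2, b3, b4⟩, h5⟩ := h
  let F : ℝ ≃o ℝ := StrictMono.orderIsoOfSurjective F₀ h3 h4
  have hF : ∀ x, F x = F₀ x := fun x => rfl
  have hnb : ∀ x, x ∉ B → NB F x := by
    intro x hx
    obtain ⟨k, c, ε, he, H⟩ := b4 x hx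
    refine NB.of_eq (a := x - ε / 2) (b := x + ε / 2) (k := k) (c := c)
      (by linarith) (by linarith) fun y y1 y2 => ?_
    rw [hF, H y (abs_lt.2 ⟨by linarith, by linarith⟩)]; norm_num
  refine ⟨F, ⟨⟨fun x => ?_, fun x hx => ?_⟩, h2⟩, h1⟩
  · by_cases hx : x ∈ B
    · obtain ⟨ε, he, H⟩ := exists_isolated b1 b2 x
      obtain ⟨k, c, hk⟩ := affine_of_NB (F := F) (show x < x + ε by linarith) fun y y1 y2 =>
        hnb y (H y (abs_lt.2 ⟨by linarith, by linarith⟩) y1.ne')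
      obtain ⟨l, d, hl⟩ := affine_of_NB (F := F) (show x - ε < x by linarith) fun y y1 y2 =>
        hnb y (H y (abs_lt.2 ⟨by linarith, by linarith⟩) y2.ne)
      refine ⟨k, l, ⟨ε, he, fun y y1 y2 => ?_⟩, ⟨ε, he, fun y y1 y2 => ?_⟩,
        fun _ => mem_Dy_iff_zpows.2 (b3 hx)⟩
      · rw [hk y y1 y2, hk x le_rfl (by linarith)]; ring
      · rw [hl y y1 y2, hl x (by linarith) le_rfl]; ring
    · obtain ⟨k, k1, k2⟩ := hnb x hx
      exact ⟨k, k, k1, k2, fun h => absurd rfl h⟩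
  · exact mem_Dy_iff_zpows.2 (h5 x (mem_Dy_iff_zpows.1 hx))

theorem Zl_inter_finite (m : ℕ) : (Zl m ∩ Set.Ico (0 : ℝ) 1).Finite := by
  apply ((Set.finite_Ico (0 : ℤ) (2 ^ m)).image fun a : ℤ => (a : ℝ) / 2 ^ m).subset
  rintro _ ⟨⟨a, rfl⟩, h1, h2⟩
  refine ⟨a, ⟨?_, ?_⟩, rfl⟩
  · rw [le_div_iff₀ (by positivity), zero_mul] at h1; exact_mod_cast h1
  · rw [div_lt_one (by positivity)] at h2; exact_mod_cast h2

theorem memT_of_lifts {f : AddCircle (1 : ℝ) → AddCircle (1 : ℝ)} {F : ℝ ≃o ℝ} (hF : F ∈ PT)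
    (h : Lifts F f) : MemT 2 1 f := by
  refine ⟨F, h, hF.2, F.strictMono, F.surjective, ⟨{x | ¬ NB F x}, ?_, ?_, ?_, ?_⟩, ?_⟩
  · obtain ⟨m, hm⟩ := Nrm.exists_breaks (Φ := 1) ⟨fun x => rfl, fun F => by simp⟩ hF
    exact (Zl_inter_finite m).subset fun x hx => ⟨by
      by_contra hc; exact hx.1 (hm x hc).1, hx.2⟩
  · intro x hx
    constructor
    · intro hc
      apply hx
      have := NB_add_int hF.2 (n := -1) hc
      simpa using this
    · intro hc
      apply hx
      have := NB_add_int hF.2 (n := 1) hc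
      simpa using this
  · intro x hx
    by_contra hc
    exact hx (hF.1.nb fun h => hc (mem_Dy_iff_zpows.1 h))
  · intro x hx
    obtain ⟨k, ⟨ε, he, H⟩, ⟨δ, hd, K⟩⟩ := not_not.1 hx
    refine ⟨k, F x - 2 ^ k * x, min ε δ, lt_min he hd, fun y hy => ?_⟩
    have h1 := abs_lt.1 hy
    have h2 := min_le_left ε δ
    have h3 := min_le_right ε δ
    push_cast
    rcases le_total x y with h4 | h4
    · rw [H y h4 (by linarith)]; ring
    · rw [K y (by linarith) h4]; ring
  · intro q hq
    exact mem_Dy_iff_zpows.1 (hF.1.2 q (mem_Dy_iff_zpows.2 hq))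

theorem memT_iff {f : AddCircle (1 : ℝ) → AddCircle (1 : ℝ)} :
    MemT 2 1 f ↔ ∃ F ∈ PT, Lifts F f :=
  ⟨exists_lift, fun ⟨_, h1, h2⟩ => memT_of_lifts h1 h2⟩

theorem mem_Tgrp_iff {f : Equiv.Perm (AddCircle (1 : ℝ))} : f ∈ Tgrp ↔ ∃ F ∈ PT, Lifts F f := by
  constructor
  · intro h
    induction h using Subgroup.closure_induction with
    | mem f hf => exact exists_lift hf
    | one => exact ⟨1, PT.one_mem, fun x => rfl⟩
    | mul f g _ _ hf hg =>
      obtain ⟨F, F1, F2⟩ := hf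
      obtain ⟨G, G1, G2⟩ := hg
      exact ⟨F * G, PT.mul_mem F1 G1, fun x => by
        rw [Equiv.Perm.mul_apply, G2, F2]; rfl⟩
    | inv f _ hf =>
      obtain ⟨F, F1, F2⟩ := hf
      refine ⟨F⁻¹, PT.inv_mem F1, fun x => ?_⟩
      rw [Equiv.Perm.inv_eq_iff_eq, F2]
      change _ = ((F (F.symm x) : ℝ) : AddCircle (1 : ℝ))
      rw [F.apply_symm_apply]
  · rintro ⟨F, h1, h2⟩
    exact Subgroup.subset_closure (memT_of_lifts h1 h2)

/-- A homeomorphism of the line commuting with the unit translation induces a permutation of the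
circle. -/
theorem exists_descend (F : ℝ ≃o ℝ) (hF : ∀ x, F (x + 1) = F x + 1) :
    ∃ f : Equiv.Perm (AddCircle (1 : ℝ)), Lifts F f := by
  have key : ∀ G : ℝ ≃o ℝ, (∀ x, G (x + 1) = G x + 1) →
      ∃ g : AddCircle (1 : ℝ) → AddCircle (1 : ℝ), Lifts G g := by
    intro G hG
    refine ⟨fun z => Quotient.liftOn' z (fun x => ((G x : ℝ) : AddCircle (1 : ℝ))) ?_, fun x => rfl⟩
    intro x y hxy
    obtain ⟨n, rfl⟩ := coe_eq_iff.1 (Quotient.sound' hxy : (x : AddCircle (1 : ℝ)) = y)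
    exact coe_eq_iff.2 ⟨n, PT_add_int hG n x⟩
  obtain ⟨f, hf⟩ := key F hF
  obtain ⟨g, hg⟩ := key F.symm fun x => by rw [F.symm_apply_eq, hF, F.apply_symm_apply]
  refine ⟨⟨f, g, fun z => ?_, fun z => ?_⟩, hf⟩
  · obtain ⟨x, rfl⟩ := exists_coe z
    rw [hf, hg, F.symm_apply_apply]
  · obtain ⟨x, rfl⟩ := exists_coe z
    rw [hg, hf, F.apply_symm_apply]

theorem exists_of_PT {F : ℝ ≃o ℝ} (hF : F ∈ PT) : ∃ f : ↥Tgrp, Lifts F f.1 := by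
  obtain ⟨f, hf⟩ := exists_descend F hF.2
  exact ⟨⟨f, mem_Tgrp_iff.2 ⟨F, hF, hf⟩⟩, hf⟩

/-- Two lifts of the same map differ by an integer translation. -/
theorem lifts_unique {F G : ℝ → ℝ} (hF : Continuous F) (hG : Continuous G)
    (h : ∀ x, (F x : AddCircle (1 : ℝ)) = (G x : ℝ)) : ∃ n : ℤ, ∀ x, G x = F x + n := by
  have h1 : ∀ x, ∃ n : ℤ, G x = F x + n := fun x => coe_eq_iff.1 (h x)
  choose N hN using h1
  have hc : Continuous fun x => (N x : ℝ) := by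
    have : (fun x => (N x : ℝ)) = fun x => G x - F x := by
      funext x; rw [hN]; ring
    rw [this]; exact hG.sub hF
  have hc2 : Continuous N := Int.isClosedEmbedding_coe_real.isEmbedding.continuous_iff.2 hc
  refine ⟨N 0, fun x => ?_⟩
  rw [hN x, PreconnectedSpace.constant inferInstance hc2 (x := x) (y := 0)]

theorem PT_of_add_int {F G : ℝ ≃o ℝ} (hF : F ∈ PT) {n : ℤ} (h : ∀ x, G x = F x + n) : G ∈ PT := by
  have : G = aff 0 n * F := by
    ext x
    rw [h]
    change _ = aff 0 n (F x)
    simp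
  rw [this]
  exact PT.mul_mem (aff_mem_PT (intCast_mem Dy n)) hF

/-- Every lift of an element of `T` lies in `PT`. -/
theorem PT_of_lifts {f : Equiv.Perm (AddCircle (1 : ℝ))} (hf : f ∈ Tgrp) {G : ℝ ≃o ℝ}
    (h : Lifts G f) : G ∈ PT := by
  obtain ⟨F, F1, F2⟩ := mem_Tgrp_iff.1 hf
  obtain ⟨n, hn⟩ := lifts_unique F.continuous G.continuous fun x => (F2 x).symm.trans (h x)
  exact PT_of_add_int F1 hn

end Circ

/-! ### Automorphisms of `T` -/

namespace Circ

theorem smul_coe {f : ↥Tgrp} {F : ℝ ≃o ℝ} (h : Lifts F f.1) (x : ℝ) :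
    f • (x : AddCircle (1 : ℝ)) = (F x : ℝ) := h x

instance : FaithfulSMul ↥Tgrp (AddCircle (1 : ℝ)) where
  eq_of_smul_eq_smul h := Subtype.ext (Equiv.ext h)

theorem continuous_of_lifts {F : ℝ → ℝ} (hF : Continuous F)
    {f : AddCircle (1 : ℝ) → AddCircle (1 : ℝ)} (h : ∀ x : ℝ, f x = (F x : ℝ)) : Continuous f := by
  have hq : Topology.IsQuotientMap ((↑) : ℝ → AddCircle (1 : ℝ)) :=
    QuotientAddGroup.isQuotientMap_mk _
  rw [hq.continuous_iff]
  have : f ∘ ((↑) : ℝ → AddCircle (1 : ℝ)) = fun x => ((F x : ℝ) : AddCircle (1 : ℝ)) := funext h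
  rw [this]
  exact (AddCircle.continuous_mk' 1).comp hF

instance : ContinuousConstSMul ↥Tgrp (AddCircle (1 : ℝ)) where
  continuous_const_smul f := by
    obtain ⟨F, -, hF⟩ := mem_Tgrp_iff.1 f.2
    exact continuous_of_lifts F.continuous hF

theorem coe_ne {x y : ℝ} (h1 : x < y) (h2 : y < x + 1) : (y : AddCircle (1 : ℝ)) ≠ x := by
  intro h
  obtain ⟨n, hn⟩ := coe_eq_iff.1 h
  have h3 : -1 < n := by
    have : (-1 : ℝ) < n := by linarith
    exact_mod_cast this
  have h4 : n < 0 := by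
    have : (n : ℝ) < 0 := by linarith
    exact_mod_cast this
  omega

theorem exists_interval {V : Set (AddCircle (1 : ℝ))} (hV : IsOpen V) {t : ℝ}
    (ht : (t : AddCircle (1 : ℝ)) ∈ V) : ∃ a ∈ Dy, ∃ b ∈ Dy, a < t ∧ t < b ∧ b < a + 1 ∧
      ∀ s, a < s → s < b → (s : AddCircle (1 : ℝ)) ∈ V := by
  have hN : ((↑) : ℝ → AddCircle (1 : ℝ)) ⁻¹' V ∈ nhds t :=
    (hV.preimage (AddCircle.continuous_mk' 1)).mem_nhds ht
  obtain ⟨ε, he, H⟩ := Metric.mem_nhds_iff.1 hN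
  have hm : 0 < min ε (1 / 2) := lt_min he (by norm_num)
  obtain ⟨a, ha, a1, a2⟩ := exists_Dy_btwn (show t - min ε (1 / 2) < t by linarith)
  obtain ⟨b, hb, b1, b2⟩ := exists_Dy_btwn (show t < t + min ε (1 / 2) by linarith)
  have m1 := min_le_left ε (1 / 2)
  have m2 := min_le_right ε (1 / 2)
  refine ⟨a, ha, b, hb, a2, b1, by linarith, fun s s1 s2 => H ?_⟩
  rw [Metric.mem_ball, Real.dist_eq, abs_lt]
  constructor <;> linarith

theorem sp_subset {f : ↥Tgrp} {F : ℝ ≃o ℝ} (h : Lifts F f.1) {a b : ℝ} (ha : F a = a)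
    (hb : ∀ x, b ≤ x → x ≤ a + 1 → F x = x) :
    Rubin.sp (AddCircle (1 : ℝ)) f ⊆ ((↑) : ℝ → AddCircle (1 : ℝ)) '' Set.Ioo a b := by
  intro z hz
  obtain ⟨s, hs, rfl⟩ : z ∈ ((↑) : ℝ → AddCircle (1 : ℝ)) '' Set.Ico a (a + 1) := by
    have : Fact ((0 : ℝ) < 1) := ⟨one_pos⟩
    rw [AddCircle.coe_image_Ico_eq]; trivial
  rw [Rubin.mem_sp, smul_coe h] at hz
  refine ⟨s, ⟨lt_of_le_of_ne hs.1 ?_, ?_⟩, rfl⟩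
  · rintro rfl; rw [ha] at hz; exact hz rfl
  · by_contra hc
    rw [hb s (not_lt.1 hc) hs.2.le] at hz
    exact hz rfl

/-- Thompson's group acts richly on the circle. -/
theorem rich : Rubin.Rich (AddCircle (1 : ℝ)) ↥Tgrp := by
  constructor
  · intro V x hV hx
    obtain ⟨t, rfl⟩ := exists_coe x
    obtain ⟨a, ha, b, hb, hat, htb, hba, H⟩ := exists_interval hV hx
    obtain ⟨F, F1, F2, F3, F4, F5⟩ := exists_move ha hb hat htb hba.le hat.le htb le_rfl
    obtain ⟨f, hf⟩ := exists_of_PT F1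
    refine ⟨f, (sp_subset hf F2 F5).trans ?_, ?_⟩
    · rintro _ ⟨s, hs, rfl⟩; exact H s hs.1 hs.2
    · have key : ∀ n : ℕ, ∃ s, t < s ∧ s < b ∧
          f ^ (n + 1) • (t : AddCircle (1 : ℝ)) = (s : ℝ) := by
        intro n
        induction n with
        | zero => exact ⟨F t, F3, F4, by rw [zero_add, pow_one, smul_coe hf]⟩
        | succ n ih =>
          obtain ⟨s, s1, s2, s3⟩ := ih
          refine ⟨F s, F3.trans (F.strictMono s1), ?_, ?_⟩
          · have := F.strictMono s2
            rwa [F5 b le_rfl hba.le] at this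
          · rw [pow_succ', mul_smul, s3, smul_coe hf]
      obtain ⟨s, s1, s2, s3⟩ := key 11
      rw [s3]
      exact coe_ne s1 (by linarith)
  · intro U q hU hq
    obtain ⟨t, rfl⟩ := exists_coe q
    obtain ⟨a, ha, b, hb, hat, htb, hba, H⟩ := exists_interval hU hq
    refine ⟨((↑) : ℝ → AddCircle (1 : ℝ)) '' Set.Ioo a b, ?_,
      QuotientAddGroup.isOpenMap_coe _ isOpen_Ioo, ⟨t, ⟨hat, htb⟩, rfl⟩, ?_⟩
    · rintro _ ⟨s, hs, rfl⟩; exact H s hs.1 hs.2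
    · rintro O hO hO2 ⟨z, hz⟩
      obtain ⟨s, ⟨s1, s2⟩, rfl⟩ := hO hz
      obtain ⟨c, -, d, -, hcs, hsd, -, K⟩ := exists_interval hO2 hz
      obtain ⟨F, F1, F2, F3, F4, F5⟩ := exists_move ha hb hat htb hba.le (le_max_left a c)
        (show max a c < min b d from
          (max_lt s1 hcs).trans (lt_min s2 hsd)) (min_le_left b d)
      obtain ⟨f, hf⟩ := exists_of_PT F1
      refine ⟨f, sp_subset hf F2 F5, ?_⟩
      rw [smul_coe hf]
      exact K _ ((le_max_right _ _).trans_lt F3) (F4.trans_le (min_le_right _ _))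

/-- Every continuous self-map of the circle lifts to a continuous map of the line. -/
theorem exists_cont_lift {φ : AddCircle (1 : ℝ) → AddCircle (1 : ℝ)} (hφ : Continuous φ) :
    ∃ Φ : ℝ → ℝ, Continuous Φ ∧ ∀ x : ℝ, φ x = (Φ x : ℝ) := by
  have cov : IsCoveringMap ((↑) : ℝ → AddCircle (1 : ℝ)) := AddCircle.isCoveringMap_coe 1
  obtain ⟨e, he⟩ := exists_coe (φ ((0 : ℝ) : AddCircle (1 : ℝ)))
  obtain ⟨Φ, ⟨-, h⟩, -⟩ := cov.existsUnique_continuousMap_lifts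
    (⟨fun x : ℝ => φ x, hφ.comp (AddCircle.continuous_mk' 1)⟩ : C(ℝ, AddCircle (1 : ℝ))) 0 e he
  exact ⟨Φ, Φ.continuous, fun x => (congrFun h x).symm⟩

/-- A homeomorphism of the circle, or its composition with `x ↦ -x`, lifts to an increasing
homeomorphism of the line commuting with the unit translation. -/
theorem exists_homeo_lift (φ : AddCircle (1 : ℝ) ≃ₜ AddCircle (1 : ℝ)) :
    ∃ Φ : ℝ ≃o ℝ, (∀ x, Φ (x + 1) = Φ x + 1) ∧
      (Lifts Φ φ ∨ Lifts Φ fun z => -φ z) := by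
  obtain ⟨Φ, hc, hl⟩ := exists_cont_lift φ.continuous
  obtain ⟨Ψ, hc', hl'⟩ := exists_cont_lift φ.symm.continuous
  -- the lifts of `φ` and `φ⁻¹` are inverse to each other up to integer translations
  obtain ⟨n, hn⟩ := lifts_unique continuous_id (hc'.comp hc) fun x => by
    change (x : AddCircle (1 : ℝ)) = (Ψ (Φ x) : ℝ)
    rw [← hl', ← hl, φ.symm_apply_apply]
  obtain ⟨m, hm⟩ := lifts_unique continuous_id (hc.comp hc') fun x => by
    change (x : AddCircle (1 : ℝ)) = (Φ (Ψ x) : ℝ)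
    rw [← hl, ← hl', φ.apply_symm_apply]
  simp only [Function.comp, id] at hn hm
  have hinj : Function.Injective Φ := fun x y h => by
    have := hn x; rw [h, hn y] at this; linarith
  have hsurj : Function.Surjective Φ := fun y => ⟨Ψ (y - m), by rw [hm]; ring⟩
  have hdeg : ∀ {Θ : ℝ → ℝ} {θ : AddCircle (1 : ℝ) → AddCircle (1 : ℝ)}, Continuous Θ →
      (∀ x : ℝ, θ x = (Θ x : ℝ)) → ∃ d : ℤ, ∀ x, Θ (x + 1) = Θ x + d := by
    intro Θ θ h1 h2
    refine lifts_unique h1 (h1.comp (continuous_add_const 1)) fun x => ?_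
    rw [← h2, ← h2, AddCircle.coe_add_period]
  obtain ⟨d, hd⟩ := hdeg hc hl
  obtain ⟨e, he⟩ := hdeg hc' hl'
  have heZ : ∀ (k : ℤ) x, Ψ (x + k) = Ψ x + k * e := by
    intro k
    induction k using Int.induction_on with
    | zero => intro x; simp
    | succ k ih =>
      intro x; have := he (x + k); push_cast at ih ⊢; rw [← add_assoc, this, ih]; ring
    | pred k ih =>
      intro x
      have := he (x + (-k - 1 : ℤ))
      push_cast at ih this ⊢
      rw [show x + (-(k : ℝ) - 1) + 1 = x + -k by ring, ih] at this
      linarith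
  have hde : d * e = 1 := by
    have h1 := hn (0 + 1)
    rw [hd, heZ, hn] at h1
    have : (d * e : ℝ) = 1 := by linarith
    exact_mod_cast this
  rcases hc.strictMono_of_inj hinj with hmono | hanti
  · have hd1 : d = 1 := by
      rcases Int.isUnit_iff.1 (IsUnit.of_mul_eq_one _ hde) with h | h
      · exact h
      · have := hmono (show (0 : ℝ) < 0 + 1 by norm_num)
        rw [hd, h] at this; norm_num at this
    exact ⟨hmono.orderIsoOfSurjective Φ hsurj, fun x => by
      change Φ (x + 1) = Φ x + 1; rw [hd, hd1]; norm_num, Or.inl hl⟩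
  · have hd1 : d = -1 := by
      rcases Int.isUnit_iff.1 (IsUnit.of_mul_eq_one _ hde) with h | h
      · have := hanti (show (0 : ℝ) < 0 + 1 by norm_num)
        rw [hd, h] at this; norm_num at this
      · exact h
    exact ⟨StrictMono.orderIsoOfSurjective (fun x => -Φ x) hanti.neg
        (neg_surjective.comp hsurj), fun x => by
      change -Φ (x + 1) = -Φ x + 1; rw [hd, hd1]; push_cast; ring, Or.inr fun x => by
      change -φ x = ((-Φ x : ℝ) : AddCircle (1 : ℝ))
      rw [hl, AddCircle.coe_neg]⟩

/-- An automorphism induced by a permutation with a lift is inner: the lift normalizes `PT`. -/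
theorem isInner_of_lifts {β : MulAut ↥Tgrp} {ψ : Equiv.Perm (AddCircle (1 : ℝ))} {Φ : ℝ ≃o ℝ}
    (h1 : ∀ x, Φ (x + 1) = Φ x + 1) (hΦ : Lifts Φ ψ)
    (hβ : ∀ f : ↥Tgrp, (β f : Equiv.Perm (AddCircle (1 : ℝ))) = ψ * f * ψ⁻¹) : IsInnerT β := by
  have hinv : Lifts Φ⁻¹ (ψ⁻¹ : Equiv.Perm _) := fun x => by
    rw [Equiv.Perm.inv_eq_iff_eq, hΦ]
    change _ = ((Φ (Φ.symm x) : ℝ) : AddCircle (1 : ℝ))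
    rw [Φ.apply_symm_apply]
  have hN : Nrm Φ := by
    refine ⟨h1, fun F => ⟨fun hF => ?_, fun hF => ?_⟩⟩
    · obtain ⟨f, hf⟩ := exists_of_PT hF
      refine PT_of_lifts (β f).2 fun x => ?_
      rw [hβ, Equiv.Perm.mul_apply, hinv, Equiv.Perm.mul_apply, hf, hΦ]; rfl
    · obtain ⟨f, hf⟩ := exists_of_PT hF
      refine PT_of_lifts (β.symm f).2 fun x => ?_
      have h3 : ((β.symm f : ↥Tgrp) : Equiv.Perm (AddCircle (1 : ℝ))) = ψ⁻¹ * f * ψ := by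
        have := hβ (β.symm f)
        rw [β.apply_symm_apply] at this
        rw [this]; group
      rw [h3, Equiv.Perm.mul_apply, hΦ, Equiv.Perm.mul_apply, hf, hinv]
      change ((Φ.symm (Φ (F (Φ.symm (Φ x)))) : ℝ) : AddCircle (1 : ℝ)) = _
      rw [Φ.symm_apply_apply, Φ.symm_apply_apply]
  have hψ : ψ ∈ Tgrp := mem_Tgrp_iff.2 ⟨Φ, hN.mem_PT, hΦ⟩
  exact ⟨⟨ψ, hψ⟩, fun f => Subtype.ext (hβ f)⟩

/-- The reflection `x ↦ -x` of the circle. -/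
def refl : Equiv.Perm (AddCircle (1 : ℝ)) := Equiv.neg _

theorem refl_conj_mem {f : Equiv.Perm (AddCircle (1 : ℝ))} (hf : f ∈ Tgrp) :
    refl * f * refl ∈ Tgrp := by
  obtain ⟨F, F1, F2⟩ := mem_Tgrp_iff.1 hf
  refine mem_Tgrp_iff.2 ⟨nconj F, nconj_mem_PT F1, fun x => ?_⟩
  change -(f (-(x : AddCircle (1 : ℝ)))) = ((-F (-x) : ℝ) : AddCircle (1 : ℝ))
  rw [← AddCircle.coe_neg, F2, AddCircle.coe_neg]

theorem refl_mul_refl : refl * refl = 1 := by ext x; exact neg_neg x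

/-- Conjugation by the reflection, as an automorphism of Thompson's group. -/
def rho : MulAut ↥Tgrp where
  toFun f := ⟨refl * f * refl, refl_conj_mem f.2⟩
  invFun f := ⟨refl * f * refl, refl_conj_mem f.2⟩
  left_inv f := Subtype.ext (by ext x; simp [refl])
  right_inv f := Subtype.ext (by ext x; simp [refl])
  map_mul' f g := Subtype.ext (by ext x; simp [refl])

/-- A lift of the reflection is decreasing. -/
theorem refl_not_mem : refl ∉ Tgrp := by
  intro h
  obtain ⟨G, -, hG⟩ := mem_Tgrp_iff.1 h
  obtain ⟨n, hn⟩ := lifts_unique continuous_neg G.continuous fun x => by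
    rw [← hG, AddCircle.coe_neg]; rfl
  have := G.strictMono (show (0 : ℝ) < 1 by norm_num)
  rw [hn, hn] at this
  linarith

/-- The centralizer of `T` in the permutations of the circle is trivial, so an inner realization of
`rho` would put the reflection itself in `T`. -/
theorem rho_not_inner : ¬ IsInnerT rho := by
  rintro ⟨g, hg⟩
  -- `g⁻¹ * refl` commutes with Thompson's group, hence is trivial
  have hcomm : ∀ (f : ↥Tgrp) (x : AddCircle (1 : ℝ)),
      g.1⁻¹ (refl (f.1 x)) = f.1 (g.1⁻¹ (refl x)) := by
    intro f x
    have h1 : (refl * f.1 * refl : Equiv.Perm _) = g.1 * f.1 * g.1⁻¹ := congrArg Subtype.val (hg f)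
    have h2 := Equiv.congr_fun h1 (refl x)
    rw [Equiv.Perm.inv_eq_iff_eq]
    simpa [refl] using h2
  apply refl_not_mem
  have : refl = g.1 := by
    ext x
    rw [← Equiv.Perm.inv_eq_iff_eq]
    by_contra hne
    obtain ⟨f, f1, f2⟩ := rich.move_one (isOpen_compl_singleton (x := g.1⁻¹ (refl x)))
      (show x ∈ _ from fun h => hne h.symm)
    have h3 : f.1 (g.1⁻¹ (refl x)) = g.1⁻¹ (refl x) := by
      by_contra hc
      exact f1 hc rfl
    rw [← hcomm] at h3
    exact f2 (refl.injective ((g.1⁻¹).injective h3))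
  rw [this]
  exact g.2

end Circ

/-- The outer automorphism group of Thompson's group `T = T_{2,1}` is
cyclic of order 2, generated by the class of conjugation by `x ↦ -x`: there is an
automorphism `ρ` of `T` acting by `ρ(f)(x) = -f(-x)`, `ρ` is not inner, and every
automorphism of `T` is inner or lies in the coset `ρ · Inn(T)`. -/
theorem stmt_15 :
    ∃ ρ : MulAut ↥Tgrp,
      (∀ (f : ↥Tgrp) (x : AddCircle (1 : ℝ)),
        ((ρ f : ↥Tgrp) : Equiv.Perm (AddCircle (1 : ℝ))) x =
          - ((f : Equiv.Perm (AddCircle (1 : ℝ))) (-x))) ∧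
      ¬ IsInnerT ρ ∧
      (∀ α : MulAut ↥Tgrp, IsInnerT α ∨ IsInnerT (ρ⁻¹ * α)) := by
  refine ⟨Circ.rho, fun f x => rfl, Circ.rho_not_inner, fun α => ?_⟩
  have : Fact ((0 : ℝ) < 1) := ⟨one_pos⟩
  obtain ⟨φ, hφ⟩ := Rubin.exists_homeo Circ.rich α
  have hα : ∀ f : ↥Tgrp, (α f : Equiv.Perm (AddCircle (1 : ℝ))) = φ.toEquiv * f * φ.toEquiv⁻¹ := by
    intro f
    rw [eq_mul_inv_iff_mul_eq]
    ext x
    exact (hφ f x).symm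
  obtain ⟨Φ, h1, h2 | h2⟩ := Circ.exists_homeo_lift φ
  · exact Or.inl (Circ.isInner_of_lifts (ψ := φ.toEquiv) h1 h2 hα)
  · refine Or.inr (Circ.isInner_of_lifts (ψ := Circ.refl * φ.toEquiv) h1 h2 fun f => ?_)
    change Circ.refl * (α f : Equiv.Perm (AddCircle (1 : ℝ))) * Circ.refl = _
    rw [hα, mul_inv_rev, inv_eq_of_mul_eq_one_right Circ.refl_mul_refl]
    simp only [mul_assoc]
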